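/- arXiv:1512.01186 — 2 statements merged into one kernel-verified Lean document; each statement's English description precedes it below -/
import Mathlib

section
/- Let s be a complex number with Re(s) > 1. Then ∫_{0 ↗ 1} (e^{iπu²}·u^{-s}/(e^{iπu} - e^{-iπu})) du = (2π)^{s/2}·e^{iπs/4 + iπ/8}·(1/Γ(s))·∫_{0 ↖ 1} (e^{-iπu²/2 + iπu/2}/(e^{-2πiu} - 1))·e^{-iπ(u-1/2)²/2}·(∫_0^∞ e^{-w²/2 - √(2π)·e^{iπ/4}·(u-1/2)·w}·w^{s-1} dw) du. (The factor e^{-iπ(u-1/2)²/2} times the inner integral divided by Γ(s) equals U(s-1/2, √(2π)e^{iπ/4}(u-1/2)), where U is the parabolic cylinder function.) -/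
open scoped Real
open MeasureTheory Set Complex

/-- Integral along the straight line `t ↦ c + e^{iθ} t`, `t ∈ ℝ`. -/
noncomputable def lineInt (c θ : ℝ) (f : ℂ → ℂ) : ℂ :=
  ∫ t : ℝ, f ((c : ℂ) + Complex.exp ((θ : ℂ) * Complex.I) * (t : ℂ)) *
    Complex.exp ((θ : ℂ) * Complex.I)

open Filter Topology in
lemma horiz_inv (a : ℝ) (ha : a ≠ 0) (R : ℝ) :
    ∫ x : ℝ in (-R)..R, ((x : ℂ) + a * I)⁻¹ = -2 * I * (Real.arctan (R / a) : ℂ) := by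
  have hne : ∀ x : ℝ, (x : ℂ) + a * I ≠ 0 := by
    intro x h
    have := congrArg Complex.im h
    simp at this
    exact ha this
  have hcont : Continuous (fun x : ℝ => ((x : ℂ) + a * I)⁻¹) :=
    Continuous.inv₀ (by fun_prop) hne
  have hcont' : Continuous (fun x : ℝ => (((-x : ℝ) : ℂ) + a * I)⁻¹) :=
    Continuous.inv₀ (by fun_prop) (fun x => hne (-x))
  have h1 : ∫ x : ℝ in (-R)..R, ((((-x : ℝ)) : ℂ) + a * I)⁻¹
      = ∫ x : ℝ in (-R)..R, ((x : ℂ) + a * I)⁻¹ := by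
    have := intervalIntegral.integral_comp_neg (a := -R) (b := R)
      (fun x : ℝ => ((x : ℂ) + a * I)⁻¹)
    simpa using this
  have h2 : ∫ x : ℝ in (-R)..R, (((x : ℂ) + a * I)⁻¹ + (((-x : ℝ) : ℂ) + a * I)⁻¹)
      = ∫ x : ℝ in (-R)..R, (-2 * I) * ((a / (a ^ 2 + x ^ 2) : ℝ) : ℂ) := by
    apply intervalIntegral.integral_congr
    intro x _
    have e1 := hne x
    have e2 := hne (-x)
    have e3 : (a : ℂ) ^ 2 + (x : ℂ) ^ 2 ≠ 0 := by
      have : a ^ 2 + x ^ 2 ≠ 0 := by positivity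
      exact_mod_cast this
    push_cast at e2 ⊢
    field_simp
    ring_nf
    simp only [show (I : ℂ) ^ 3 = -I by rw [pow_succ, I_sq]; ring]
    ring
  rw [intervalIntegral.integral_add (hcont.intervalIntegrable _ _)
    (hcont'.intervalIntegrable _ _), h1, intervalIntegral.integral_const_mul,
    intervalIntegral.integral_ofReal, integral_div_sq_add_sq ] at h2
  rw [neg_div, Real.arctan_neg] at h2
  rw [ofReal_sub, ofReal_neg] at h2
  linear_combination h2 / 2

open Filter Topology in
lemma strip_residue (a b : ℝ) (ha : a < 0) (hb : 0 < b) (q : ℂ → ℂ)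
    (hq : DifferentiableOn ℂ q {z | z.im ∈ Icc a b})
    (hia : Integrable (fun x : ℝ => q ((x : ℂ) + a * I) / ((x : ℂ) + a * I)))
    (hib : Integrable (fun x : ℝ => q ((x : ℂ) + b * I) / ((x : ℂ) + b * I)))
    (B : ℝ → ℝ) (hB : Tendsto B atTop (𝓝 0))
    (hB1 : ∀ᶠ R in atTop, ∀ y ∈ Icc a b,
      ‖q (((R : ℝ) : ℂ) + y * I) / (((R : ℝ) : ℂ) + y * I)‖ ≤ B R)
    (hB2 : ∀ᶠ R in atTop, ∀ y ∈ Icc a b,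
      ‖q (((-R : ℝ) : ℂ) + y * I) / (((-R : ℝ) : ℂ) + y * I)‖ ≤ B R) :
    (∫ x : ℝ, q ((x : ℂ) + a * I) / ((x : ℂ) + a * I)) -
      (∫ x : ℝ, q ((x : ℂ) + b * I) / ((x : ℂ) + b * I)) = 2 * π * I * q 0 := by
  set h := dslope q 0 with hh
  have hval : ∀ z : ℂ, z ≠ 0 → h z = q z / z - q 0 * z⁻¹ := by
    intro z hz
    rw [hh, dslope_of_ne _ hz, slope_def_field]
    field_simp
    simp
  have hnea : ∀ {a : ℝ}, a ≠ 0 → ∀ x : ℝ, (x : ℂ) + a * I ≠ 0 := by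
    intro a ha x h
    have := congrArg Complex.im h
    simp at this
    exact ha this
  have hner : ∀ {x : ℝ}, x ≠ 0 → ∀ a : ℝ, (x : ℂ) + a * I ≠ 0 := by
    intro x ha a h
    have := congrArg Complex.re h
    simp at this
    exact ha this
  have hnhds : {z : ℂ | z.im ∈ Icc a b} ∈ 𝓝 (0 : ℂ) :=
    Complex.continuous_im.continuousAt.preimage_mem_nhds (by simpa using Icc_mem_nhds ha hb)
  have hdiff : DifferentiableOn ℂ h {z | z.im ∈ Icc a b} :=
    (Complex.differentiableOn_dslope hnhds).2 hq
  -- the rectangle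
  have hrect : ∀ R : ℝ, (∫ x : ℝ in (-R)..R, h (x + a * I)) - (∫ x : ℝ in (-R)..R, h (x + b * I)) +
      I • (∫ y : ℝ in a..b, h ((R : ℝ) + y * I)) -
      I • (∫ y : ℝ in a..b, h ((-R : ℝ) + y * I)) = 0 := by
    intro R
    have := Complex.integral_boundary_rect_eq_zero_of_differentiableOn h
      (⟨-R, a⟩ : ℂ) (⟨R, b⟩ : ℂ) (hdiff.mono ?_)
    · simpa using this
    · intro z hz
      have := hz.2
      simpa [uIcc_of_le (ha.trans hb).le] using this
  have hhor : ∀ c : ℝ, c ≠ 0 →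
      Integrable (fun x : ℝ => q ((x : ℂ) + c * I) / ((x : ℂ) + c * I)) →
      ∀ R : ℝ, ∫ x : ℝ in (-R)..R, h (x + c * I) =
        (∫ x : ℝ in (-R)..R, q ((x : ℂ) + c * I) / ((x : ℂ) + c * I))
          - q 0 * (-2 * I * (Real.arctan (R / c) : ℂ)) := by
    intro c hc hi R
    rw [← horiz_inv c hc, ← intervalIntegral.integral_const_mul,
      ← intervalIntegral.integral_sub hi.intervalIntegrable]
    · exact intervalIntegral.integral_congr fun x _ => hval _ (hnea hc x)
    · apply Continuous.intervalIntegrable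
      exact continuous_const.mul (Continuous.inv₀ (by fun_prop) (hnea hc))
  have hlimhor : ∀ c : ℝ, ∀ l : ℝ, c ≠ 0 →
      Tendsto (fun R : ℝ => Real.arctan (R / c)) atTop (𝓝 l) →
      Integrable (fun x : ℝ => q ((x : ℂ) + c * I) / ((x : ℂ) + c * I)) →
      Tendsto (fun R : ℝ => ∫ x : ℝ in (-R)..R, h (x + c * I)) atTop
        (𝓝 ((∫ x : ℝ, q ((x : ℂ) + c * I) / ((x : ℂ) + c * I)) - q 0 * (-2 * I * (l : ℂ)))) := by
    intro c l hc hl hi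
    simp_rw [hhor c hc hi]
    refine (intervalIntegral_tendsto_integral hi tendsto_neg_atTop_atBot tendsto_id).sub ?_
    exact ((continuous_ofReal.tendsto l).comp hl).const_mul _ |>.const_mul _
  have la : Tendsto (fun R : ℝ => Real.arctan (R / a)) atTop (𝓝 (-(π/2))) :=
    (Real.tendsto_arctan_atBot.mono_right nhdsWithin_le_nhds).comp
      (tendsto_id.atTop_div_const_of_neg ha)
  have lb : Tendsto (fun R : ℝ => Real.arctan (R / b)) atTop (𝓝 (π/2)) :=
    (Real.tendsto_arctan_atTop.mono_right nhdsWithin_le_nhds).comp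
      (tendsto_id.atTop_div_const hb)
  have hBl : Tendsto (fun R : ℝ => (B R + ‖q 0‖ * R⁻¹) * |b - a|) atTop (𝓝 0) := by
    have := (hB.add (tendsto_inv_atTop_zero.const_mul ‖q 0‖)).mul_const |b - a|
    simpa using this
  have hbd : ∀ R : ℝ, ∀ x : ℝ, 0 < R → |x| = R → (∀ y ∈ Icc a b,
      ‖q ((x : ℂ) + y * I) / ((x : ℂ) + y * I)‖ ≤ B R) →
      ‖∫ y : ℝ in a..b, h ((x : ℂ) + y * I)‖ ≤ (B R + ‖q 0‖ * R⁻¹) * |b - a| := by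
    intro R x hR hx hy
    apply intervalIntegral.norm_integral_le_of_norm_le_const
    intro y hy'
    rw [uIoc_of_le (ha.trans hb).le] at hy'
    have hx0 : x ≠ 0 := by rintro rfl; simp at hx; linarith
    rw [hval _ (hner hx0 y)]
    refine (norm_sub_le _ _).trans (add_le_add (hy y ⟨hy'.1.le, hy'.2⟩) ?_)
    rw [norm_mul, norm_inv]
    have : R ≤ ‖(x : ℂ) + y * I‖ := by
      rw [← hx]
      simpa using Complex.abs_re_le_norm ((x : ℂ) + y * I)
    gcongr
  have v1 : Tendsto (fun R : ℝ => ∫ y : ℝ in a..b, h (((R : ℝ) : ℂ) + y * I)) atTop (𝓝 0) := by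
    apply squeeze_zero_norm' _ hBl
    filter_upwards [hB1, eventually_gt_atTop 0] with R h1 h2
    exact hbd R R h2 (abs_of_pos h2) h1
  have v2 : Tendsto (fun R : ℝ => ∫ y : ℝ in a..b, h (((-R : ℝ) : ℂ) + y * I)) atTop (𝓝 0) := by
    apply squeeze_zero_norm' _ hBl
    filter_upwards [hB2, eventually_gt_atTop 0] with R h1 h2
    exact hbd R (-R) h2 (by rw [abs_neg, abs_of_pos h2]) h1
  have L := (((hlimhor a _ ha.ne la hia).sub (hlimhor b _ hb.ne' lb hib)).add
    (v1.const_smul I)).sub (v2.const_smul I)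
  have L' := tendsto_nhds_unique (L.congr hrect) tendsto_const_nhds
  push_cast at L'
  simp only [smul_zero] at L'
  linear_combination L'

lemma kern_ne (k : ℝ) (hk : 0 < k) (hk2 : k ^ 2 = 1 / 2) (c' : ℝ) (h0 : 0 < c') (h1 : c' < 1)
    (z : ℂ) (hz : z.im ∈ Icc (-(k * c')) (k * (1 - c'))) (hz0 : z ≠ 0) :
    Complex.exp (-(2 * π * I * ((k : ℂ) * (-1 + I) * z))) - 1 ≠ 0 := by
  intro h
  obtain ⟨n, hn⟩ := Complex.exp_eq_one_iff.1 (sub_eq_zero.1 h)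
  have hpi : (2 * π * I : ℂ) ≠ 0 := by simp [Real.pi_ne_zero]
  have h2 : (k : ℂ) * (-1 + I) * z = -n := by
    apply mul_left_cancel₀ hpi
    linear_combination -hn
  have hk2' : (k : ℂ) ^ 2 = 1 / 2 := by
    rw [← ofReal_pow, hk2]; norm_num
  have h3 : z = n * k * (1 + I) := by
    linear_combination (-(k : ℂ) * (1 + I)) * h2 - 2 * z * hk2' + (k : ℂ) ^ 2 * z * I_sq
  have h4 : z.im = n * k := by
    rw [h3]; simp
  rw [h4] at hz
  have e1 : (-1 : ℝ) < n := by nlinarith [hz.1]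
  have e2 : (n : ℝ) < 1 := by nlinarith [hz.2]
  have e1' : (-1 : ℤ) < n := by exact_mod_cast e1
  have e2' : n < (1 : ℤ) := by exact_mod_cast e2
  have : n = 0 := by omega
  apply hz0
  rw [h3, this]; simp

lemma kern_bound (k : ℝ) (hk : 1 / 2 ≤ k) (hk2 : k ^ 2 = 1 / 2) (c t m : ℝ)
    (hm : 0 < m) (hm1 : m ≤ c) (hm2 : m ≤ 1 - c) (x y : ℝ) (hx : 2 ≤ |x|) (hy : |y| ≤ 1) :
    ‖Complex.exp (-(2 * π * I * ((c : ℂ) + (k : ℂ) * (1 + I) * t) *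
        ((k : ℂ) * (-1 + I) * ((x : ℂ) + y * I)))) /
      (Complex.exp (-(2 * π * I * ((k : ℂ) * (-1 + I) * ((x : ℂ) + y * I)))) - 1)‖
      ≤ 2 * Real.exp (2 * π * |t| + m) * Real.exp (-m * |x|) := by
  set X := 2 * π * k * (x - y) with hX
  have hk2' : (k : ℂ) ^ 2 = 1 / 2 := by
    rw [← ofReal_pow, hk2]; norm_num
  have r1 : (-(2 * π * I * ((c : ℂ) + (k : ℂ) * (1 + I) * t) *
        ((k : ℂ) * (-1 + I) * ((x : ℂ) + y * I)))).re = c * X - 2 * π * t * y := by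
    have : (-(2 * π * I * ((c : ℂ) + (k : ℂ) * (1 + I) * t) *
        ((k : ℂ) * (-1 + I) * ((x : ℂ) + y * I)))) =
        ((c * X - 2 * π * t * y : ℝ) : ℂ) + ((2 * π * c * k * (x + y) + 2 * π * t * x : ℝ) : ℂ) * I := by
      push_cast [hX]
      linear_combination (-(2 * π * I * (1 + I) * (-1 + I) * t * ((x : ℂ) + y * I))) * hk2' +
        (- π * I * t * ((x : ℂ) + y * I) - 2 * π * c * k * (x + y * I - y)  + 2 * π * y * t ) * I_sq
    rw [this]; simp
  have r2 : (-(2 * π * I * ((k : ℂ) * (-1 + I) * ((x : ℂ) + y * I)))).re = X := by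
    simp [hX]; ring
  have hden : |Real.exp X - 1| ≤
      ‖Complex.exp (-(2 * π * I * ((k : ℂ) * (-1 + I) * ((x : ℂ) + y * I)))) - 1‖ := by
    have := abs_norm_sub_norm_le
      (Complex.exp (-(2 * π * I * ((k : ℂ) * (-1 + I) * ((x : ℂ) + y * I))))) 1
    rwa [Complex.norm_exp, r2, norm_one] at this
  have hty : -(2 * π * t * y) ≤ 2 * π * |t| := by
    have : |t * y| ≤ |t| := by
      rw [abs_mul]; exact mul_le_of_le_one_right (abs_nonneg _) hy
    have := (abs_le.1 this).1
    nlinarith [Real.pi_pos]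
  have hpk : 1 ≤ 2 * π * k := by nlinarith [Real.pi_gt_three]
  have hy' := abs_le.1 hy
  rw [norm_div, Complex.norm_exp, r1]
  have key : ∀ d : ℝ, 0 < d → d ≤ |Real.exp X - 1| →
      Real.exp (c * X) ≤ 2 * d * Real.exp (m - m * |x|) →
      Real.exp (c * X - 2 * π * t * y) /
        ‖Complex.exp (-(2 * π * I * ((k : ℂ) * (-1 + I) * ((x : ℂ) + y * I)))) - 1‖ ≤
      2 * Real.exp (2 * π * |t| + m) * Real.exp (-m * |x|) := by
    intro d hd hd1 hd2
    rw [div_le_iff₀ (hd.trans_le (hd1.trans hden))]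
    calc Real.exp (c * X - 2 * π * t * y) = Real.exp (c * X) * Real.exp (-(2 * π * t * y)) := by
          rw [← Real.exp_add]; ring_nf
      _ ≤ (2 * d * Real.exp (m - m * |x|)) * Real.exp (2 * π * |t|) := by gcongr
      _ = 2 * Real.exp (2 * π * |t| + m) * Real.exp (-m * |x|) * d := by
          rw [mul_assoc (2 : ℝ) (Real.exp _) (Real.exp _), ← Real.exp_add, mul_assoc (2 * d),
            ← Real.exp_add]
          ring_nf
      _ ≤ _ := by
          gcongr
          exact hd1.trans hden
  rcases le_abs'.1 hx with hx' | hx'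
  · rw [show |x| = -x from abs_of_neg (by linarith)] at key ⊢
    have hX1 : X ≤ x + 1 := by
      have : x - y ≤ x + 1 := by linarith
      nlinarith
    have he : Real.exp X ≤ 1 / 2 := by
      have : Real.exp X ≤ Real.exp (-1) := Real.exp_le_exp.2 (by linarith)
      have h3 := Real.exp_neg_one_lt_d9
      linarith
    apply key (1 / 2) (by norm_num)
    · rw [abs_of_neg (by linarith)]; linarith
    · have : Real.exp (c * X) ≤ Real.exp (m - m * -x) := Real.exp_le_exp.2 (by nlinarith)
      linarith
  · rw [show |x| = x from abs_of_pos (by linarith)] at key ⊢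
    have hX1 : x - 1 ≤ X := by
      have : x - 1 ≤ x - y := by linarith
      nlinarith
    have he : 2 ≤ Real.exp X := by
      have : X + 1 ≤ Real.exp X := Real.add_one_le_exp X
      linarith
    apply key (Real.exp X / 2) (by positivity)
    · rw [abs_of_pos (by linarith)]; linarith
    · have : Real.exp (c * X) ≤ Real.exp X * Real.exp (m - m * x) := by
        rw [← Real.exp_add]
        exact Real.exp_le_exp.2 (by nlinarith)
      linarith

open Filter Topology Asymptotics in
lemma kern_integrable (k : ℝ) (hk0 : 1 / 2 ≤ k) (hk2 : k ^ 2 = 1 / 2) (c t : ℝ)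
    (hc : 0 < c) (hc1 : c < 1) (y : ℝ) (hy : |y| ≤ 1)
    (hne : ∀ x : ℝ,
      Complex.exp (-(2 * π * I * ((k : ℂ) * (-1 + I) * ((x : ℂ) + y * I)))) - 1 ≠ 0) :
    Integrable (fun x : ℝ => Complex.exp (-(2 * π * I * ((c : ℂ) + (k : ℂ) * (1 + I) * t) *
        ((k : ℂ) * (-1 + I) * ((x : ℂ) + y * I)))) /
      (Complex.exp (-(2 * π * I * ((k : ℂ) * (-1 + I) * ((x : ℂ) + y * I)))) - 1)) := by
  set m := min c (1 - c) with hm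
  have hm0 : 0 < m := lt_min hc (by linarith)
  have hbd := fun x => kern_bound k hk0 hk2 c t m hm0 (min_le_left _ _) (min_le_right _ _) x y
  refine LocallyIntegrable.integrable_of_isBigO_atBot_atTop (g := fun x => Real.exp (m * x))
    (g' := fun x => Real.exp (-m * x)) (Continuous.locallyIntegrable ?_) ?_ ?_ ?_ ?_
  · exact Continuous.div (by fun_prop) (by fun_prop) hne
  · refine IsBigO.of_bound (2 * Real.exp (2 * π * |t| + m)) ?_
    filter_upwards [eventually_le_atBot (-2)] with x hx
    have hxa : |x| = -x := abs_of_neg (by linarith)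
    have := hbd x (by rw [hxa]; linarith) hy
    rw [hxa] at this
    simpa [abs_of_pos (Real.exp_pos _)] using this
  · exact ⟨Iic 0, Iic_mem_atBot 0, integrableOn_exp_mul_Iic hm0 0⟩
  · refine IsBigO.of_bound (2 * Real.exp (2 * π * |t| + m)) ?_
    filter_upwards [eventually_ge_atTop 2] with x hx
    have hxa : |x| = x := abs_of_pos (by linarith)
    have := hbd x (by rw [hxa]; linarith) hy
    rw [hxa] at this
    simpa [abs_of_pos (Real.exp_pos _)] using this
  · exact ⟨Ioi 0, Ioi_mem_atTop 0, integrableOn_exp_mul_Ioi (by linarith) 0⟩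

open Filter Topology in
lemma kern_integral (k : ℝ) (hk0 : 1 / 2 ≤ k) (hk2 : k ^ 2 = 1 / 2) (c c' t : ℝ)
    (hc : 0 < c) (hc1 : c < 1) (h0 : 0 < c') (h1 : c' < 1) :
    Integrable (fun r : ℝ => Complex.exp (-(2 * π * I * ((c : ℂ) + (k : ℂ) * (1 + I) * t) *
        ((c' : ℂ) + (k : ℂ) * (-1 + I) * r))) /
      (Complex.exp (-(2 * π * I * ((c' : ℂ) + (k : ℂ) * (-1 + I) * r))) - 1)) ∧
    (1 - Complex.exp (2 * π * I * ((c : ℂ) + (k : ℂ) * (1 + I) * t))) * (((k : ℂ) * (-1 + I)) *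
      ∫ r : ℝ, Complex.exp (-(2 * π * I * ((c : ℂ) + (k : ℂ) * (1 + I) * t) *
        ((c' : ℂ) + (k : ℂ) * (-1 + I) * r))) /
      (Complex.exp (-(2 * π * I * ((c' : ℂ) + (k : ℂ) * (-1 + I) * r))) - 1)) = -1 := by
  set u : ℂ := (c : ℂ) + (k : ℂ) * (1 + I) * t with hu
  have hk2' : (k : ℂ) ^ 2 = 1 / 2 := by
    rw [← ofReal_pow, hk2]; norm_num
  have hk : 0 < k := by linarith
  have hk1 : k ≤ 1 := by nlinarith
  have hkc : (k : ℂ) * (-1 + I) ≠ 0 := by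
    apply mul_ne_zero (by exact_mod_cast hk.ne')
    intro h
    have := congrArg Complex.im h
    simp at this
  set E3 : ℂ := (k : ℂ) * (-1 + I) with hE3
  set a : ℝ := -(k * c') with ha
  set b : ℝ := k * (1 - c') with hb
  have ha0 : a < 0 := by rw [ha]; nlinarith
  have hb0 : 0 < b := by rw [hb]; nlinarith
  have ha1 : -1 ≤ a := by rw [ha]; nlinarith
  have hb1 : b ≤ 1 := by rw [hb]; nlinarith
  set g : ℂ → ℂ := fun z => Complex.exp (-(2 * π * I * u * (E3 * z))) /
      (Complex.exp (-(2 * π * I * (E3 * z))) - 1) with hg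
  set p : ℂ → ℂ := fun z => Complex.exp (-(2 * π * I * (E3 * z))) with hp
  have hpd : Differentiable ℂ p := by rw [hp]; fun_prop
  set D := dslope p 0 with hD
  have hDd : Differentiable ℂ D := by
    rw [← differentiableOn_univ] at hpd ⊢
    exact (Complex.differentiableOn_dslope univ_mem).2 hpd
  have hD0 : D 0 = -(2 * π * I * E3) := by
    rw [hD, dslope_same]
    have : HasDerivAt p (p 0 * -(2 * π * I * (E3 * 1))) 0 :=
      ((((hasDerivAt_id (0 : ℂ)).const_mul E3).const_mul (2 * π * I)).neg).cexp
    rw [this.deriv, hp]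
    simp
  have hDv : ∀ z, z ≠ 0 → D z = (p z - 1) / z := by
    intro z hz
    rw [hD, dslope_of_ne _ hz, slope_def_field]
    simp [hp]
  have hne : ∀ z : ℂ, z.im ∈ Icc a b → z ≠ 0 → p z - 1 ≠ 0 :=
    fun z hz hz0 => kern_ne k hk hk2 c' h0 h1 z hz hz0
  have hDne : ∀ z : ℂ, z.im ∈ Icc a b → D z ≠ 0 := by
    intro z hz
    by_cases hz0 : z = 0
    · rw [hz0, hD0]
      simp [Real.pi_ne_zero, hkc]
    · rw [hDv z hz0]
      exact div_ne_zero (hne z hz hz0) hz0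
  set q : ℂ → ℂ := fun z => Complex.exp (-(2 * π * I * u * (E3 * z))) / D z with hq
  have hqd : DifferentiableOn ℂ q {z | z.im ∈ Icc a b} := by
    intro z hz
    exact (DifferentiableAt.div (by fun_prop) hDd.differentiableAt
      (hDne z hz)).differentiableWithinAt
  have hqg : ∀ z, z ≠ 0 → q z / z = g z := by
    intro z hz
    simp only [hq, hg]
    rw [hDv z hz, div_div, div_mul_cancel₀ _ hz]
  have hnea : ∀ {a : ℝ}, a ≠ 0 → ∀ x : ℝ, (x : ℂ) + a * I ≠ 0 := by
    intro a ha x h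
    have := congrArg Complex.im h
    simp at this
    exact ha this
  have hner : ∀ {x : ℝ}, x ≠ 0 → ∀ a : ℝ, (x : ℂ) + a * I ≠ 0 := by
    intro x ha a h
    have := congrArg Complex.re h
    simp at this
    exact ha this
  have hIa : Integrable (fun x : ℝ => g ((x : ℂ) + a * I)) := by
    refine kern_integrable k hk0 hk2 c t hc hc1 a (abs_le.2 ⟨ha1, by linarith⟩) ?_
    intro x
    exact hne _ (by simpa using (ha0.trans hb0).le) (hnea ha0.ne x)
  have hIb : Integrable (fun x : ℝ => g ((x : ℂ) + b * I)) := by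
    refine kern_integrable k hk0 hk2 c t hc hc1 b (abs_le.2 ⟨by linarith, hb1⟩) ?_
    intro x
    exact hne _ (by simpa using (ha0.trans hb0).le) (hnea hb0.ne' x)
  set m := min c (1 - c) with hm
  have hm0 : 0 < m := lt_min hc (by linarith)
  have hbd : ∀ x y : ℝ, 2 ≤ |x| → y ∈ Icc a b → ‖g ((x : ℂ) + y * I)‖ ≤ _ :=
    fun x y hx hy => kern_bound k hk0 hk2 c t m hm0 (min_le_left _ _) (min_le_right _ _) x y hx
      (abs_le.2 ⟨by linarith [hy.1], by linarith [hy.2]⟩)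
  have hres := strip_residue a b ha0 hb0 q hqd
    (hIa.congr (ae_of_all _ fun x => (hqg _ (hnea ha0.ne x)).symm))
    (hIb.congr (ae_of_all _ fun x => (hqg _ (hnea hb0.ne' x)).symm))
    (fun R => 2 * Real.exp (2 * π * |t| + m) * Real.exp (-m * R)) (by
      have h : Tendsto (fun R : ℝ => -m * R) atTop atBot :=
        tendsto_id.const_mul_atTop_of_neg (by linarith)
      simpa using (Real.tendsto_exp_atBot.comp h).const_mul (2 * Real.exp (2 * π * |t| + m)))
    (by
      filter_upwards [eventually_ge_atTop 2] with R hR y hy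
      rw [hqg _ (hner (by linarith) y)]
      have hxa : |R| = R := abs_of_pos (by linarith)
      have := hbd R y (by rw [hxa]; exact hR) hy
      rwa [hxa] at this)
    (by
      filter_upwards [eventually_ge_atTop 2] with R hR y hy
      rw [hqg _ (hner (by linarith) y)]
      have hxa : |-R| = R := by rw [abs_neg]; exact abs_of_pos (by linarith)
      have := hbd (-R) y (by rw [hxa]; exact hR) hy
      rwa [hxa] at this)
  simp_rw [hqg _ (hnea ha0.ne _), hqg _ (hnea hb0.ne' _)] at hres
  -- translate the two lines
  have hline : ∀ r : ℝ, E3 * (((r + -(k * c') : ℝ) : ℂ) + a * I) = (c' : ℂ) + E3 * r := by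
    intro r
    rw [hE3, ha]
    push_cast
    linear_combination (2 * (c' : ℂ)) * hk2' - (c' : ℂ) * k ^ 2 * I_sq
  have hline2 : ∀ r : ℝ, E3 * (((r + (k - k * c') : ℝ) : ℂ) + b * I) = (c' : ℂ) + E3 * r - 1 := by
    intro r
    rw [hE3, hb]
    push_cast
    linear_combination (2 * (c' : ℂ) - 2) * hk2' + (1 - (c' : ℂ)) * k ^ 2 * I_sq
  have hA : ∀ r : ℝ, g (((r + -(k * c') : ℝ) : ℂ) + a * I) =
      Complex.exp (-(2 * π * I * u * ((c' : ℂ) + E3 * r))) /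
      (Complex.exp (-(2 * π * I * ((c' : ℂ) + E3 * r))) - 1) := by
    intro r
    simp only [hg]
    rw [hline]
  have hB : ∀ r : ℝ, g (((r + (k - k * c') : ℝ) : ℂ) + b * I) =
      Complex.exp (2 * π * I * u) * (Complex.exp (-(2 * π * I * u * ((c' : ℂ) + E3 * r))) /
      (Complex.exp (-(2 * π * I * ((c' : ℂ) + E3 * r))) - 1)) := by
    intro r
    simp only [hg]
    rw [hline2, ← mul_div_assoc, ← Complex.exp_add]
    congr 2
    · ring_nf
    · rw [show -(2 * π * I * ((c' : ℂ) + E3 * r - 1)) =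
        -(2 * π * I * ((c' : ℂ) + E3 * r)) + 2 * π * I by ring, Complex.exp_add,
        Complex.exp_two_pi_mul_I, mul_one]
  have eA := integral_add_right_eq_self (μ := volume) (fun x : ℝ => g ((x : ℂ) + a * I)) (-(k * c'))
  have eB := integral_add_right_eq_self (μ := volume) (fun x : ℝ => g ((x : ℂ) + b * I)) (k - k * c')
  have iA := hIa.comp_add_right (-(k * c'))
  simp_rw [hA] at eA iA
  simp_rw [hB] at eB
  refine ⟨iA, ?_⟩
  rw [integral_const_mul] at eB
  rw [← eA, ← eB] at hres
  have hq0 : E3 * (2 * π * I * q 0) = -1 := by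
    simp only [hq, hD0]
    simp
    field_simp
    exact I_sq
  rw [← hq0, ← hres]
  ring

lemma meas_part (s z : ℂ) :
    AEStronglyMeasurable (fun w : ℝ => (w : ℂ) ^ s * Complex.exp (-(z * w)))
      (volume.restrict (Ioi (0 : ℝ))) := by
  refine ContinuousOn.aestronglyMeasurable (ContinuousOn.mul ?_ (by fun_prop)) measurableSet_Ioi
  intro x hx
  exact (continuousAt_ofReal_cpow_const x s (Or.inr (ne_of_gt hx))).continuousWithinAt

lemma real_part (σ b : ℝ) (hσ : -1 < σ) (hb : 0 < b) :
    Integrable (fun w : ℝ => w ^ σ * Real.exp (-(b * w))) (volume.restrict (Ioi (0 : ℝ))) := by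
  have := integrableOn_rpow_mul_exp_neg_mul_rpow (p := 1) (s := σ) hσ one_pos hb
  simpa [IntegrableOn] using this

lemma norm_part (s z : ℂ) (w : ℝ) (hw : 0 < w) :
    ‖(w : ℂ) ^ s * Complex.exp (-(z * w))‖ = w ^ s.re * Real.exp (-(z.re * w)) := by
  rw [norm_mul, Complex.norm_cpow_eq_rpow_re_of_pos hw, Complex.norm_exp]
  simp

lemma integ_part (s z : ℂ) (hs : -1 < s.re) (hz : 0 < z.re) :
    Integrable (fun w : ℝ => (w : ℂ) ^ s * Complex.exp (-(z * w)))
      (volume.restrict (Ioi (0 : ℝ))) := by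
  refine (real_part s.re z.re hs hz).mono' (meas_part s z) ?_
  filter_upwards [ae_restrict_mem measurableSet_Ioi] with w hw
  exact (norm_part s z w hw).le

open Filter Topology in
lemma gamma_complex (s z : ℂ) (hs : 0 < s.re) (hz : 0 < z.re) :
    ∫ w in Ioi (0 : ℝ), (w : ℂ) ^ (s - 1) * Complex.exp (-(z * w)) =
      (1 / z) ^ s * Complex.Gamma s := by
  set U : Set ℂ := {z | 0 < z.re} with hU
  have hUo : IsOpen U := isOpen_lt continuous_const Complex.continuous_re
  have hUc : IsPreconnected U := (convex_halfSpace_re_gt 0).isPreconnected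
  have hf : DifferentiableOn ℂ
      (fun z : ℂ => ∫ w in Ioi (0 : ℝ), (w : ℂ) ^ (s - 1) * Complex.exp (-(z * w))) U := by
    intro z₀ hz₀
    have hz₀' : 0 < z₀.re := hz₀
    have hV : {z : ℂ | z₀.re / 2 < z.re} ∈ 𝓝 z₀ :=
      (isOpen_lt continuous_const Complex.continuous_re).mem_nhds (by simp; linarith)
    have := hasDerivAt_integral_of_dominated_loc_of_deriv_le
      (μ := volume.restrict (Ioi (0 : ℝ)))
      (F := fun (z : ℂ) (w : ℝ) => (w : ℂ) ^ (s - 1) * Complex.exp (-(z * w)))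
      (F' := fun (z : ℂ) (w : ℝ) => (w : ℂ) ^ (s - 1) * (Complex.exp (-(z * w)) * (-(1 * (w : ℂ)))))
      (bound := fun w : ℝ => w ^ s.re * Real.exp (-(z₀.re / 2 * w))) hV
      (Eventually.of_forall fun z => meas_part _ z)
      (integ_part (s - 1) z₀ (by simpa using hs) hz₀) ?_ ?_
      (real_part s.re (z₀.re / 2) (by linarith) (by linarith)) ?_
    · exact this.2.differentiableAt.differentiableWithinAt
    · have h := (meas_part (s - 1) z₀).mul
        (Continuous.aestronglyMeasurable (f := fun w : ℝ => -(1 * (w : ℂ))) (by fun_prop))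
      refine h.congr (ae_of_all _ fun w => ?_)
      simp only [Pi.mul_apply]
      ring
    · filter_upwards [ae_restrict_mem measurableSet_Ioi] with w hw z hz
      have hw' : 0 < w := hw
      have hz' : z₀.re / 2 < z.re := hz
      rw [← mul_assoc, norm_mul, norm_part _ _ w hw']
      simp only [one_mul, norm_neg, Complex.norm_real, Real.norm_eq_abs, abs_of_pos hw', sub_re,
        one_re]
      rw [Real.rpow_sub_one hw'.ne']
      have : w ^ s.re / w * Real.exp (-(z.re * w)) * w = w ^ s.re * Real.exp (-(z.re * w)) := by
        field_simp
      rw [this]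
      gcongr
    · refine ae_of_all _ fun w z _ => ?_
      exact (((hasDerivAt_id z).mul_const (w : ℂ)).neg.cexp).const_mul _
  have hg : DifferentiableOn ℂ (fun z : ℂ => (1 / z) ^ s * Complex.Gamma s) U := by
    intro z₀ hz₀
    have hz₀' : 0 < z₀.re := hz₀
    have hne : z₀ ≠ 0 := by rintro rfl; simp at hz₀'
    have hsl : 1 / z₀ ∈ slitPlane := by
      left
      rw [one_div, inv_re]
      exact div_pos hz₀' (normSq_pos.2 hne)
    have hd : DifferentiableAt ℂ (fun z : ℂ => 1 / z) z₀ := by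
      fun_prop (disch := exact hne)
    exact ((hd.cpow_const hsl).mul_const _).differentiableWithinAt
  refine (hf.analyticOnNhd hUo).eqOn_of_preconnected_of_frequently_eq (hg.analyticOnNhd hUo) hUc
    (z₀ := 1) (by simp [hU]) ?_ hz
  have ht : Tendsto (fun x : ℝ => (x : ℂ)) (𝓝[>] 1) (𝓝[≠] (1 : ℂ)) := by
    refine tendsto_nhdsWithin_iff.2 ⟨?_, ?_⟩
    · exact (by simpa using continuous_ofReal.tendsto (1 : ℝ) :
        Tendsto (fun x : ℝ => (x : ℂ)) (𝓝 1) (𝓝 (1 : ℂ))).mono_left nhdsWithin_le_nhds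
    · filter_upwards [self_mem_nhdsWithin] with x hx
      have : x ≠ 1 := ne_of_gt hx
      simpa using this
  refine ht.frequently (Eventually.frequently ?_)
  filter_upwards [self_mem_nhdsWithin] with x hx
  have hx' : (1 : ℝ) < x := hx
  exact Complex.integral_cpow_mul_exp_neg_mul_Ioi hs (by linarith)

lemma exp_pi_four (k : ℝ) (hk : k = √2 / 2) :
    Complex.exp (((π / 4 : ℝ) : ℂ) * I) = (k : ℂ) * (1 + I) := by
  rw [Complex.exp_mul_I, ← ofReal_cos, ← ofReal_sin, Real.cos_pi_div_four, Real.sin_pi_div_four,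
    ← hk]
  ring

lemma exp_three_pi_four (k : ℝ) (hk : k = √2 / 2) :
    Complex.exp (((3 * π / 4 : ℝ) : ℂ) * I) = (k : ℂ) * (-1 + I) := by
  rw [Complex.exp_mul_I, ← ofReal_cos, ← ofReal_sin,
    show 3 * π / 4 = π - π / 4 by ring, Real.cos_pi_sub, Real.sin_pi_sub,
    Real.cos_pi_div_four, Real.sin_pi_div_four, ← hk]
  push_cast
  ring

lemma gamma_part (s : ℂ) (hs : 1 < s.re) (Q : ℝ) (hQ : Q = √(2 * π)) (e1 u : ℂ)
    (he1 : e1 = Complex.exp (π * I / 4)) (hre : 0 < (e1 * u).re) :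
    ∫ w in Ioi (0 : ℝ), Complex.exp (-((Q : ℂ) * e1 * u * w)) * (w : ℂ) ^ (s - 1) =
      Complex.Gamma s * ((2 * (π : ℂ)) ^ (s / 2))⁻¹ * (Complex.exp (π * I * s / 4))⁻¹ * u ^ (-s) := by
  have hQ0 : 0 < Q := by rw [hQ]; positivity
  set z : ℂ := (Q : ℂ) * e1 * u with hz
  have hzre : 0 < z.re := by
    rw [hz, mul_assoc, re_ofReal_mul]; positivity
  have hz0 : z ≠ 0 := by intro h; rw [h] at hzre; simp at hzre
  have hu0 : u ≠ 0 := by rintro rfl; simp at hre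
  have harg : |z.arg| < π / 2 := Complex.abs_arg_lt_pi_div_two_iff.2 (Or.inl hzre)
  have harg' := abs_lt.1 harg
  have hlogQ : Complex.log (2 * (π : ℂ)) = 2 * Complex.log Q := by
    rw [← ofReal_log hQ0.le, hQ, Real.log_sqrt (by positivity)]
    rw [show (2 * (π : ℂ)) = ((2 * π : ℝ) : ℂ) by push_cast; rfl, ← ofReal_log (by positivity)]
    push_cast
    ring
  have hlog : Complex.log u = Complex.log z - Complex.log Q - π * I / 4 := by
    have h1 : u = Complex.exp (Complex.log z - Complex.log Q - π * I / 4) := by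
      rw [Complex.exp_sub, Complex.exp_sub, Complex.exp_log hz0,
        Complex.exp_log (by exact_mod_cast hQ0.ne'), ← he1, hz]
      have : (Q : ℂ) ≠ 0 := by exact_mod_cast hQ0.ne'
      have : e1 ≠ 0 := by rw [he1]; exact Complex.exp_ne_zero _
      field_simp
    have him : (Complex.log z - Complex.log Q - π * I / 4).im = z.arg - π / 4 := by
      rw [← ofReal_log hQ0.le]
      simp [Complex.log_im]
    rw [h1, Complex.log_exp]
    · rw [him]; linarith [Real.pi_pos]
    · rw [him]; linarith [Real.pi_pos]
  have := gamma_complex s z (by linarith) hzre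
  simp_rw [mul_comm (Complex.exp _)]
  rw [this, one_div, Complex.cpow_def_of_ne_zero (inv_ne_zero hz0),
    Complex.log_inv _ (by intro h; rw [h] at harg'; linarith [Real.pi_pos]),
    Complex.cpow_def_of_ne_zero hu0,
    Complex.cpow_def_of_ne_zero (by simp [Real.pi_ne_zero]), hlogQ, hlog, ← Complex.exp_neg,
    ← Complex.exp_neg, mul_assoc (Complex.Gamma s), mul_assoc (Complex.Gamma s),
    ← Complex.exp_add, ← Complex.exp_add, mul_comm]
  congr 2
  ring

lemma gauss_part (Q : ℝ) (hQ : (Q : ℂ) ^ 2 = 2 * π) (e1 : ℂ) (he : e1 ^ 2 = I) (c v w : ℂ) :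
    ∫ t : ℝ, Complex.exp (π * I * (c + e1 * t) ^ 2 + π * I * (c + e1 * t) -
      2 * π * I * (c + e1 * t) * v - Q * e1 * (c + e1 * t) * w) =
    Complex.exp (-(π * I * (v - 1 / 2) ^ 2) - w ^ 2 / 2 - Q * e1 * (v - 1 / 2) * w) := by
  have hpi : (π : ℂ) ≠ 0 := by exact_mod_cast Real.pi_ne_zero
  have := integral_cexp_quadratic (b := -(π : ℂ)) (by simpa using Real.pi_pos)
    (e1 * (2 * π * I * c + π * I - 2 * π * I * v - Q * e1 * w))
    (π * I * c ^ 2 + π * I * c - 2 * π * I * c * v - Q * e1 * c * w)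
  rw [neg_neg, div_self hpi, one_cpow, one_mul] at this
  rw [show (fun t : ℝ => Complex.exp (π * I * (c + e1 * t) ^ 2 + π * I * (c + e1 * t) -
      2 * π * I * (c + e1 * t) * v - Q * e1 * (c + e1 * t) * w)) = fun t : ℝ =>
      Complex.exp (-(π : ℂ) * (t : ℂ) ^ 2 + (e1 * (2 * π * I * c + π * I - 2 * π * I * v - Q * e1 * w))
        * t + (π * I * c ^ 2 + π * I * c - 2 * π * I * c * v - Q * e1 * c * w)) from ?_, this]
  · congr 1
    field_simp
    ring_nf
    simp only [hQ, show e1 ^ 4 = I ^ 2 by rw [← he]; ring, show e1 ^ 3 = e1 * I by rw [← he]; ring,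
      he]
    ring_nf
    simp only [I_sq, show I ^ 3 = -I by rw [pow_succ, I_sq]; ring]
    ring
  · funext t
    congr 1
    linear_combination (π * I * t ^ 2) * he + π * t ^ 2 * I_sq

lemma main_core (s : ℂ) (hs : 1 < s.re) (c c' : ℝ) (hc : 0 < c) (hc' : c < 1)
    (hc₁ : 0 < c') (hc₂ : c' < 1) (k Q : ℝ) (hk0 : 1 / 2 ≤ k) (hk2 : k ^ 2 = 1 / 2)
    (hQ : Q = √(2 * π)) (e1 e3 : ℂ) (he1 : e1 = (k : ℂ) * (1 + I)) (he3 : e3 = (k : ℂ) * (-1 + I))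
    (hexp : e1 = Complex.exp (π * I / 4)) :
    (∫ t : ℝ, Complex.exp ((π : ℂ) * I * ((c : ℂ) + e1 * t) ^ 2) * ((c : ℂ) + e1 * t) ^ (-s) /
        (Complex.exp ((π : ℂ) * I * ((c : ℂ) + e1 * t)) -
          Complex.exp (-((π : ℂ) * I * ((c : ℂ) + e1 * t)))) * e1) =
    (2 * (π : ℂ)) ^ (s / 2) *
      Complex.exp ((π : ℂ) * I * s / 4 + (π : ℂ) * I / 8) *
      (Complex.Gamma s)⁻¹ *
      ∫ r : ℝ, Complex.exp (-((π : ℂ) * I * ((c' : ℂ) + e3 * r) ^ 2 / 2) +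
            (π : ℂ) * I * ((c' : ℂ) + e3 * r) / 2) /
          (Complex.exp (-(2 * (π : ℂ) * I * ((c' : ℂ) + e3 * r))) - 1) *
        Complex.exp (-((π : ℂ) * I * ((c' : ℂ) + e3 * r - 1 / 2) ^ 2 / 2)) *
        (∫ w in Ioi (0 : ℝ),
          Complex.exp (-((w : ℂ) ^ 2 / 2) - (Q : ℂ) * e1 *
                ((c' : ℂ) + e3 * r - 1 / 2) * (w : ℂ)) * (w : ℂ) ^ (s - 1)) * e3 := by
  have hk2' : (k : ℂ) ^ 2 = 1 / 2 := by
    rw [← ofReal_pow, hk2]; norm_num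
  have hk : 0 < k := by linarith
  have hQ0 : 0 < Q := by rw [hQ]; positivity
  have hQ2 : (Q : ℂ) ^ 2 = 2 * π := by
    rw [← ofReal_pow, hQ, Real.sq_sqrt (by positivity)]; push_cast; rfl
  have e1sq : e1 ^ 2 = I := by
    rw [he1]; linear_combination (1 + I) ^ 2 * hk2' + I_sq / 2
  have e13 : e1 * e3 = -1 := by
    rw [he1, he3]; linear_combination (-1 + I ^ 2) * hk2' + I_sq / 2
  have hΓ : Complex.Gamma s ≠ 0 := Complex.Gamma_ne_zero_of_re_pos (by linarith)
  set μ : Measure ℝ := volume.restrict (Ioi (0 : ℝ)) with hμ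
  -- the triple integrand
  set A' : ℝ → ℂ := fun t => e1 * Complex.exp (π * I * ((c : ℂ) + e1 * t) ^ 2 +
    π * I * ((c : ℂ) + e1 * t)) with hA'
  set B' : ℝ → ℝ → ℂ := fun t r => e3 * (Complex.exp (-(2 * π * I * ((c : ℂ) + e1 * t) *
        ((c' : ℂ) + e3 * r))) / (Complex.exp (-(2 * π * I * ((c' : ℂ) + e3 * r))) - 1)) with hB'
  set C' : ℝ → ℝ → ℂ := fun t w =>
    Complex.exp (-((Q : ℂ) * e1 * ((c : ℂ) + e1 * t) * w)) * (w : ℂ) ^ (s - 1) with hC'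
  set F : ℝ → ℝ × ℝ → ℂ := fun t p => A' t * (B' t p.1 * C' t p.2) with hF
  set A : ℝ → ℂ := fun t => e1 * Complex.exp (π * I * ((c : ℂ) + e1 * t) ^ 2 +
    π * I * ((c : ℂ) + e1 * t) - 2 * π * I * (e1 * t) * c') with hA
  have hAi : Integrable A := by
    have := (integrable_cexp_quadratic' (b := -(π : ℂ)) (by simpa using Real.pi_pos)
      (2 * π * I * c * e1 + π * I * e1 - 2 * π * I * e1 * c') (π * I * c ^ 2 + π * I * c)).const_mul e1
    refine this.congr (ae_of_all _ fun t => ?_)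
    simp only [hA]
    congr 2
    linear_combination (-(π * I * t ^ 2)) * e1sq - π * t ^ 2 * I_sq
  have hBi : Integrable (B' 0) := by
    have := (kern_integral k hk0 hk2 c c' 0 hc hc' hc₁ hc₂).1.const_mul e3
    rw [← he1, ← he3] at this
    exact this
  have hCi : Integrable (C' 0) μ := by
    refine (integ_part (s - 1) ((Q : ℂ) * e1 * c) (by simp; linarith) ?_).congr
      (ae_of_all _ fun w => ?_)
    · rw [he1]; simp; positivity
    · simp only [hC', ofReal_zero, mul_zero, add_zero]
      ring
  have hGi : Integrable (fun z : ℝ × (ℝ × ℝ) => A z.1 * (B' 0 z.2.1 * C' 0 z.2.2))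
      (volume.prod (volume.prod μ)) := hAi.mul_prod (hBi.mul_prod hCi)
  have hFG : ∀ z : ℝ × (ℝ × ℝ), Function.uncurry F z =
      (A z.1 * (B' 0 z.2.1 * C' 0 z.2.2)) *
        Complex.exp (((2 * π * z.1 * z.2.1 - Q * z.1 * z.2.2 : ℝ) : ℂ) * I) := by
    rintro ⟨t, r, w⟩
    simp only [Function.uncurry, hF, hA', hB', hC', hA, ofReal_zero, mul_zero, add_zero]
    set d := (Complex.exp (-(2 * π * I * ((c' : ℂ) + e3 * r))) - 1)
    have : Complex.exp (π * I * ((c : ℂ) + e1 * t) ^ 2 + π * I * ((c : ℂ) + e1 * t)) *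
        Complex.exp (-(2 * π * I * ((c : ℂ) + e1 * t) * ((c' : ℂ) + e3 * r))) *
        Complex.exp (-((Q : ℂ) * e1 * ((c : ℂ) + e1 * t) * w)) =
        Complex.exp (π * I * ((c : ℂ) + e1 * t) ^ 2 +
          π * I * ((c : ℂ) + e1 * t) - 2 * π * I * (e1 * t) * c') *
        Complex.exp (-(2 * π * I * (c : ℂ) * ((c' : ℂ) + e3 * r))) *
        Complex.exp (-((Q : ℂ) * e1 * (c : ℂ) * w)) *
        Complex.exp (((2 * π * t * r - Q * t * w : ℝ) : ℂ) * I) := by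
      simp only [← Complex.exp_add]
      congr 1
      push_cast
      linear_combination (-(2 * π * I * t * r)) * e13 - Q * t * w * e1sq
    linear_combination (e1 * e3 * (w : ℂ) ^ (s - 1) / d) * this
  have hFi : Integrable (Function.uncurry F) (volume.prod (volume.prod μ)) := by
    refine hGi.mono ?_ (ae_of_all _ fun z => ?_)
    · rw [show Function.uncurry F = _ from funext hFG]
      exact hGi.aestronglyMeasurable.mul (Continuous.aestronglyMeasurable (by fun_prop))
    · rw [hFG, norm_mul, Complex.norm_exp_ofReal_mul_I, mul_one]
  have hswap := integral_integral_swap hFi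
  -- left-hand side
  have hL : ∀ t : ℝ, ∫ p, F t p ∂(volume.prod μ) =
      (Complex.Gamma s * ((2 * (π : ℂ)) ^ (s / 2))⁻¹ * (Complex.exp (π * I * s / 4))⁻¹) *
      (Complex.exp ((π : ℂ) * I * ((c : ℂ) + e1 * t) ^ 2) * ((c : ℂ) + e1 * t) ^ (-s) /
        (Complex.exp ((π : ℂ) * I * ((c : ℂ) + e1 * t)) -
          Complex.exp (-((π : ℂ) * I * ((c : ℂ) + e1 * t)))) * e1) := by
    intro t
    simp only [hF]
    rw [integral_const_mul, integral_prod_mul]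
    have hre : 0 < (e1 * ((c : ℂ) + e1 * t)).re := by
      have : e1 * ((c : ℂ) + e1 * t) = e1 * c + I * t := by rw [← e1sq]; ring
      rw [this, he1]; simp; positivity
    have h1 : ∫ w, C' t w ∂μ = _ := gamma_part s hs Q hQ e1 ((c : ℂ) + e1 * t) hexp hre
    have h2 := (kern_integral k hk0 hk2 c c' t hc hc' hc₁ hc₂).2
    rw [← he1, ← he3, ← integral_const_mul] at h2
    change _ * (∫ r, B' t r) = -1 at h2
    rw [h1]
    set u := (c : ℂ) + e1 * t
    set x := ∫ r, B' t r
    simp only [hA']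
    have hx1 : Complex.exp (2 * π * I * u) = Complex.exp (π * I * u) * Complex.exp (π * I * u) := by
      rw [← Complex.exp_add]; congr 1; ring
    rw [Complex.exp_add, Complex.exp_neg]
    rw [hx1] at h2
    set y := Complex.exp (π * I * u) with hy
    have hy0 : y ≠ 0 := Complex.exp_ne_zero _
    have hd : y * y - 1 ≠ 0 := by
      intro h
      have : 1 - y * y = 0 := by linear_combination -h
      rw [this, zero_mul] at h2
      norm_num at h2
    have hx : x = 1 / (y * y - 1) := by
      rw [eq_div_iff hd]; linear_combination -h2
    have hd' : y - y⁻¹ ≠ 0 := by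
      intro h
      apply hd
      have : y * (y - y⁻¹) = 0 := by rw [h, mul_zero]
      rwa [mul_sub, mul_inv_cancel₀ hy0] at this
    have hd2 : y * y - 1 = y * (y - y⁻¹) := by rw [mul_sub, mul_inv_cancel₀ hy0]
    rw [hx, hd2]
    have : y * (1 / (y * (y - y⁻¹))) = 1 / (y - y⁻¹) := by
      rw [one_div, mul_inv, ← mul_assoc, mul_inv_cancel₀ hy0, one_mul, one_div]
    linear_combination (e1 * Complex.exp (π * I * u ^ 2) * (Complex.Gamma s *
      ((2 * (π : ℂ)) ^ (s / 2))⁻¹ * (Complex.exp (π * I * s / 4))⁻¹ * u ^ (-s))) * this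
  -- right-hand side
  have hR : ∀ p : ℝ × ℝ, ∫ t, F t p = Complex.exp (π * I / 8) *
      (Complex.exp (-((π : ℂ) * I * ((c' : ℂ) + e3 * p.1) ^ 2 / 2) +
            (π : ℂ) * I * ((c' : ℂ) + e3 * p.1) / 2) /
          (Complex.exp (-(2 * (π : ℂ) * I * ((c' : ℂ) + e3 * p.1))) - 1) *
        Complex.exp (-((π : ℂ) * I * ((c' : ℂ) + e3 * p.1 - 1 / 2) ^ 2 / 2)) *
        (Complex.exp (-((p.2 : ℂ) ^ 2 / 2) - (Q : ℂ) * e1 *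
                ((c' : ℂ) + e3 * p.1 - 1 / 2) * (p.2 : ℂ)) * (p.2 : ℂ) ^ (s - 1)) * e3) := by
    rintro ⟨r, w⟩
    simp only
    set v := (c' : ℂ) + e3 * r with hv
    set d := (Complex.exp (-(2 * (π : ℂ) * I * v)) - 1) with hd
    have h1 : ∀ t : ℝ, F t (r, w) = (e1 * e3 / d * (w : ℂ) ^ (s - 1)) *
        Complex.exp (π * I * (c + e1 * t) ^ 2 + π * I * (c + e1 * t) -
      2 * π * I * (c + e1 * t) * v - Q * e1 * (c + e1 * t) * w) := by
      intro t
      simp only [hF, hA', hB', hC', ← hv, ← hd]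
      rw [sub_eq_add_neg (_ - _) (Q * e1 * (c + e1 * t) * w : ℂ),
        sub_eq_add_neg _ (2 * π * I * (c + e1 * t) * v : ℂ),
        Complex.exp_add _ (-(Q * e1 * (c + e1 * t) * w : ℂ)),
        Complex.exp_add _ (-(2 * π * I * (c + e1 * t) * v : ℂ))]
      ring
    simp_rw [h1]
    rw [integral_const_mul, gauss_part Q hQ2 e1 e1sq]
    have h2 : e1 * Complex.exp (-(π * I * (v - 1 / 2) ^ 2) - w ^ 2 / 2 - Q * e1 * (v - 1 / 2) * w) =
        Complex.exp (π * I / 8) * Complex.exp (-((π : ℂ) * I * v ^ 2 / 2) + (π : ℂ) * I * v / 2) *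
        Complex.exp (-((π : ℂ) * I * (v - 1 / 2) ^ 2 / 2)) *
        Complex.exp (-((w : ℂ) ^ 2 / 2) - (Q : ℂ) * e1 * (v - 1 / 2) * w) := by
      nth_rewrite 1 [hexp]
      simp only [← Complex.exp_add]
      congr 1
      ring
    linear_combination (e3 / d * (w : ℂ) ^ (s - 1)) * h2
  have hRi := hFi.integral_prod_right
  simp only [Function.uncurry] at hRi
  rw [integral_prod _ hRi] at hswap
  simp_rw [hL, hR] at hswap
  simp_rw [integral_const_mul, integral_mul_const, integral_const_mul] at hswap
  rw [Complex.exp_add]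
  simp_rw [integral_mul_const]
  have h2pi : (2 * (π : ℂ)) ^ (s / 2) ≠ 0 := by
    rw [Complex.cpow_def_of_ne_zero (by simp [Real.pi_ne_zero])]
    exact Complex.exp_ne_zero _
  have hE : Complex.exp (π * I * s / 4) ≠ 0 := Complex.exp_ne_zero _
  set X := ∫ (t : ℝ), Complex.exp ((π : ℂ) * I * ((c : ℂ) + e1 * t) ^ 2) *
    ((c : ℂ) + e1 * t) ^ (-s) / (Complex.exp ((π : ℂ) * I * ((c : ℂ) + e1 * t)) -
          Complex.exp (-((π : ℂ) * I * ((c : ℂ) + e1 * t))))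
  have h3 : X * e1 = ((2 * (π : ℂ)) ^ (s / 2) * Complex.exp (π * I * s / 4) *
      (Complex.Gamma s)⁻¹) * (Complex.Gamma s * ((2 * (π : ℂ)) ^ (s / 2))⁻¹ *
      (Complex.exp (π * I * s / 4))⁻¹ * (X * e1)) := by
    field_simp
  rw [h3, hswap]
  ring

/-- Transformation of `∫_{0↗1} e^{iπu²} u^{-s}/(e^{iπu} - e^{-iπu}) du` into an
integral over the line `0 ↖ 1`; the factor `e^{-iπ(u-1/2)²/2}` times the inner
integral divided by `Γ(s)` is `U(s - 1/2, √(2π) e^{iπ/4} (u - 1/2))`. -/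
theorem riemann_siegel_parabolic_cylinder_nw (s : ℂ) (hs : 1 < s.re)
    (c c' : ℝ) (hc : 0 < c) (hc' : c < 1) (hc₁ : 0 < c') (hc₂ : c' < 1) :
    lineInt c (π/4) (fun u =>
      Complex.exp ((π : ℂ) * Complex.I * u ^ 2) * u ^ (-s) /
        (Complex.exp ((π : ℂ) * Complex.I * u) - Complex.exp (-((π : ℂ) * Complex.I * u)))) =
    (2 * (π : ℂ)) ^ (s / 2) *
      Complex.exp ((π : ℂ) * Complex.I * s / 4 + (π : ℂ) * Complex.I / 8) *
      (Complex.Gamma s)⁻¹ *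
      lineInt c' (3 * π / 4) (fun u =>
        Complex.exp (-((π : ℂ) * Complex.I * u ^ 2 / 2) + (π : ℂ) * Complex.I * u / 2) /
          (Complex.exp (-(2 * (π : ℂ) * Complex.I * u)) - 1) *
        Complex.exp (-((π : ℂ) * Complex.I * (u - 1 / 2) ^ 2 / 2)) *
        ∫ w in Set.Ioi (0 : ℝ),
          Complex.exp (-((w : ℂ) ^ 2 / 2) -
              (Real.sqrt (2 * π) : ℂ) * Complex.exp ((π : ℂ) * Complex.I / 4) *
                (u - 1 / 2) * (w : ℂ)) *
            (w : ℂ) ^ (s - 1)) := by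
  have hk2 : (√2 / 2) ^ 2 = 1 / 2 := by
    rw [div_pow, Real.sq_sqrt (by norm_num)]; norm_num
  have hk0 : 1 / 2 ≤ √2 / 2 := by
    have : (1 : ℝ) ≤ √2 := Real.one_le_sqrt.2 (by norm_num)
    linarith
  have hE : Complex.exp ((π : ℂ) * Complex.I / 4) = Complex.exp (((π / 4 : ℝ) : ℂ) * Complex.I) := by
    congr 1; push_cast; ring
  have key := main_core s hs c c' hc hc' hc₁ hc₂ (√2 / 2) (√(2 * π)) hk0 hk2 rfl
    (Complex.exp (((π / 4 : ℝ) : ℂ) * Complex.I)) (Complex.exp (((3 * π / 4 : ℝ) : ℂ) * Complex.I))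
    (exp_pi_four _ rfl) (exp_three_pi_four _ rfl) hE.symm
  unfold lineInt
  rw [hE]
  exact key
end

section
/- Let s be a complex number with Re(s) < 1. Then ∫_{0 ↘ 1} (e^{-iπu²}·u^{s-1}/(e^{iπu} - e^{-iπu})) du = (2π)^{(1-s)/2}·e^{-iπ(2-s)/4}·(1/Γ(1-s))·∫_{-1/2 ↙ 1/2} (e^{iπu²}/(e^{2πiu} + 1))·(∫_0^∞ e^{-w²/2 - √(2π)·e^{-iπ/4}·u·w}·w^{-s} dw) du. (The inner integral over w equals Γ(1-s)·e^{-iπu²/2}·U(1/2-s, √(2π)e^{-iπ/4}u), where U is the parabolic cylinder function; this is the complex conjugate form of the representation of F(s), giving the stated representation of conj(F(1 - conj(s))).) -/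
open scoped Real
open MeasureTheory Set Complex

namespace RSaux
open Filter Topology


/-- The integrability of the real weight. -/
lemma weight_int (σ b : ℝ) (hσ : -1 < σ) (hb : 0 < b) :
    IntegrableOn (fun w : ℝ => w ^ σ * Real.exp (-(b * w))) (Ioi 0) := by
  have := integrableOn_rpow_mul_exp_neg_mul_rpow (p := 1) (s := σ) (b := b) hσ one_pos hb
  simpa using this

lemma norm_cpow_exp (a r : ℂ) {w : ℝ} (hw : 0 < w) :
    ‖(w : ℂ) ^ a * cexp (-(r * w))‖ = w ^ a.re * Real.exp (-(r.re * w)) := by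
  rw [norm_mul, norm_cpow_eq_rpow_re_of_pos hw, Complex.norm_exp]
  simp

lemma cpow_meas (a : ℂ) : AEStronglyMeasurable (fun w : ℝ => (w : ℂ) ^ a)
    (volume.restrict (Ioi 0)) := by
  refine ContinuousOn.aestronglyMeasurable ?_ measurableSet_Ioi
  intro w hw
  exact (continuousAt_ofReal_cpow_const w a (Or.inr (ne_of_gt hw))).continuousWithinAt

lemma cpow_exp_int (a r : ℂ) (ha : -1 < a.re) (hr : 0 < r.re) :
    IntegrableOn (fun w : ℝ => (w : ℂ) ^ a * cexp (-(r * w))) (Ioi 0) := by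
  refine Integrable.mono' (weight_int a.re r.re ha hr) ?_ ?_
  · exact (cpow_meas a).mul (by fun_prop)
  · filter_upwards [ae_restrict_mem measurableSet_Ioi] with w hw
    exact (norm_cpow_exp a r hw).le

lemma gamma_complex (a r : ℂ) (ha : 0 < a.re) (hr : 0 < r.re) :
    ∫ w : ℝ in Ioi 0, (w : ℂ) ^ (a - 1) * cexp (-(r * w)) = r ^ (-a) * Complex.Gamma a := by
  set U : Set ℂ := {z | 0 < z.re} with hU
  have hUo : IsOpen U := isOpen_lt continuous_const Complex.continuous_re
  have hconv : Convex ℝ U := convex_halfSpace_re_gt 0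
  have hf : DifferentiableOn ℂ
      (fun r : ℂ => ∫ w : ℝ in Ioi 0, (w : ℂ) ^ (a - 1) * cexp (-(r * w))) U := by
    intro r₀ hr₀
    have hr₀' : 0 < r₀.re := hr₀
    have key := hasDerivAt_integral_of_dominated_loc_of_deriv_le
      (μ := volume.restrict (Ioi (0:ℝ))) (𝕜 := ℂ) (x₀ := r₀)
      (s := Metric.ball r₀ (r₀.re / 2))
      (F := fun r w => (w : ℂ) ^ (a - 1) * cexp (-(r * w)))
      (F' := fun r w => (w : ℂ) ^ (a - 1) * (cexp (-(r * w)) * (-w)))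
      (bound := fun w => w ^ a.re * Real.exp (-((r₀.re / 2) * w)))
      (Metric.ball_mem_nhds _ (by positivity))
      (Eventually.of_forall fun r => (cpow_meas _).mul (by fun_prop))
      (cpow_exp_int (a - 1) r₀ (by simpa using ha) hr₀)
      ((cpow_meas _).mul (by fun_prop)) ?_ (weight_int _ _ (by linarith) (by positivity)) ?_
    · exact key.2.differentiableAt.differentiableWithinAt
    · filter_upwards [ae_restrict_mem measurableSet_Ioi] with w hw r hrb
      have hw' : 0 < w := hw
      rw [← mul_assoc, norm_mul, norm_cpow_exp _ _ hw']
      have h1 : r₀.re / 2 ≤ r.re := by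
        have h2 : ‖r - r₀‖ < r₀.re / 2 := by simpa [dist_eq_norm] using hrb
        have h3 := (abs_le.1 (Complex.abs_re_le_norm (r - r₀))).1
        simp at h3
        linarith
      have h4 : w ^ a.re = w ^ (a - 1).re * w := by
        rw [sub_re, one_re, Real.rpow_sub_one hw'.ne', div_mul_cancel₀ _ hw'.ne']
      rw [h4, norm_neg, norm_real, Real.norm_of_nonneg hw'.le]
      have : Real.exp (-(r.re * w)) ≤ Real.exp (-(r₀.re / 2 * w)) := by
        apply Real.exp_le_exp.2; nlinarith
      have hp : 0 ≤ w ^ (a - 1).re := by positivity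
      calc _ = w ^ (a - 1).re * w * Real.exp (-(r.re * w)) := by ring
        _ ≤ _ := by gcongr
    · filter_upwards with w r hrb
      refine HasDerivAt.const_mul _ (HasDerivAt.cexp ?_)
      have := ((hasDerivAt_id r).mul_const (w : ℂ)).fun_neg
      simpa using this
  have hg : DifferentiableOn ℂ (fun r : ℂ => r ^ (-a) * Complex.Gamma a) U := by
    intro z hz
    have : z ∈ slitPlane := Or.inl hz
    exact ((differentiableAt_id.cpow_const this).mul_const _).differentiableWithinAt
  have := (hf.analyticOnNhd hUo).eqOn_of_preconnected_of_frequently_eq (hg.analyticOnNhd hUo)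
    hconv.isPreconnected (z₀ := 1) (by simp [hU]) ?_
  · exact this hr
  · have hlim : Tendsto (fun n : ℕ => ((1 + 1 / ((n : ℝ) + 1) : ℝ) : ℂ)) atTop (𝓝[≠] 1) := by
      rw [tendsto_nhdsWithin_iff]
      constructor
      · have := (tendsto_one_div_add_atTop_nhds_zero_nat (𝕜 := ℝ)).const_add 1
        have h2 := (Complex.continuous_ofReal.tendsto _).comp this
        simpa [Function.comp_def] using h2
      · refine Eventually.of_forall fun n h => ?_
        have h' : ((1 + 1 / ((n : ℝ) + 1) : ℝ) : ℂ) = ((1:ℝ):ℂ) := by simpa using h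
        have := Complex.ofReal_injective h'
        have h3 : (0:ℝ) < 1 / ((n : ℝ) + 1) := by positivity
        linarith
    refine hlim.frequently (Frequently.of_forall fun n => ?_)
    have hpos : (0:ℝ) < 1 + 1 / ((n : ℝ) + 1) := by positivity
    rw [integral_cpow_mul_exp_neg_mul_Ioi ha hpos]
    congr 1
    rw [one_div, inv_cpow, cpow_neg]
    rw [arg_ofReal_of_nonneg hpos.le]; exact Real.pi_pos.ne


/-- The unit vector `e^{-iπ/4}`. -/
noncomputable def ep : ℂ := cexp (-((π : ℂ) * I / 4))

lemma ep_eq : ep = ((√2 / 2 : ℝ) : ℂ) - ((√2 / 2 : ℝ) : ℂ) * I := by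
  have h : (-((π : ℂ) * I / 4)) = ((-(π / 4) : ℝ) : ℂ) * I := by push_cast; ring
  rw [ep, h, Complex.exp_mul_I, ← ofReal_cos, ← ofReal_sin, Real.cos_neg, Real.sin_neg,
    Real.cos_pi_div_four, Real.sin_pi_div_four]
  push_cast; ring

lemma ep_re : ep.re = √2 / 2 := by rw [ep_eq]; simp
lemma ep_im : ep.im = -(√2 / 2) := by rw [ep_eq]; simp

lemma ep_sq : ep ^ 2 = -I := by
  rw [ep_eq]
  have h : ((√2 / 2 : ℝ) : ℂ) ^ 2 = 1 / 2 := by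
    rw [← ofReal_pow, div_pow, Real.sq_sqrt (by norm_num)]; push_cast; norm_num
  linear_combination (1 - 2 * I + I ^ 2) * h + (1/2) * I_sq

lemma ep_norm : ‖ep‖ = 1 := by
  have h : (-((π : ℂ) * I / 4)) = ((-(π / 4) : ℝ) : ℂ) * I := by push_cast; ring
  rw [ep, h, Complex.norm_exp_ofReal_mul_I]

lemma ep_conj : ep * (starRingEnd ℂ) ep = 1 := by
  rw [Complex.mul_conj, Complex.normSq_eq_norm_sq, ep_norm]; simp

lemma ep_ne : ep ≠ 0 := Complex.exp_ne_zero _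

/-- `e^{iπu} - e^{-iπu}` -/
noncomputable def D (u : ℂ) : ℂ := cexp ((π : ℂ) * I * u) - cexp (-((π : ℂ) * I * u))

lemma D_zero {u : ℂ} (h : D u = 0) : ∃ n : ℤ, u = n := by
  rw [D, sub_eq_zero, Complex.exp_eq_exp_iff_exists_int] at h
  obtain ⟨n, hn⟩ := h
  refine ⟨n, ?_⟩
  have hp : (π : ℂ) * I ≠ 0 := mul_ne_zero (ofReal_ne_zero.2 Real.pi_ne_zero) I_ne_zero
  apply mul_left_cancel₀ hp
  linear_combination hn / 2

lemma D_diff : Differentiable ℂ D := by unfold D; fun_prop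

lemma D_cont : Continuous D := D_diff.continuous

lemma D_lower (u : ℂ) : Real.exp (π * |u.im|) - Real.exp (-(π * |u.im|)) ≤ ‖D u‖ := by
  have h1 : ‖cexp ((π : ℂ) * I * u)‖ = Real.exp (-(π * u.im)) := by
    rw [Complex.norm_exp]; simp
  have h2 : ‖cexp (-((π : ℂ) * I * u))‖ = Real.exp (π * u.im) := by
    rw [Complex.norm_exp]; simp
  rcases le_total 0 u.im with h | h
  · rw [abs_of_nonneg h, ← h1, ← h2, D, norm_sub_rev]
    exact norm_sub_norm_le _ _
  · rw [abs_of_nonpos h, mul_neg, neg_neg, ← h1, ← h2, D]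
    exact norm_sub_norm_le _ _

lemma D_lower' (u : ℂ) (h : 1 ≤ |u.im|) : Real.exp (π * |u.im|) / 2 ≤ ‖D u‖ := by
  refine le_trans ?_ (D_lower u)
  have h1 : Real.exp (-(π * |u.im|)) ≤ 1 := by
    rw [Real.exp_le_one_iff]
    have := Real.pi_pos
    have := abs_nonneg u.im
    nlinarith
  have h2 : 2 ≤ Real.exp (π * |u.im|) := by
    have := Real.add_one_le_exp (π * |u.im|)
    have := Real.pi_gt_three
    nlinarith
  linarith

lemma line_im (c : ℝ) (t : ℝ) : ((c : ℂ) + ep * t).im = -(√2 / 2 * t) := by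
  simp [ep_im, ep_re]

lemma line_re (c : ℝ) (t : ℝ) : ((c : ℂ) + ep * t).re = c + √2 / 2 * t := by
  simp [ep_im, ep_re]

lemma D_line_ne {c : ℝ} (h0 : 0 < c) (h1 : c < 1) (t : ℝ) : D (c + ep * t) ≠ 0 := by
  intro h
  obtain ⟨n, hn⟩ := D_zero h
  have hi := congrArg Complex.im hn
  have hr := congrArg Complex.re hn
  rw [line_im] at hi
  rw [line_re] at hr
  simp at hi hr
  have h2 : t = 0 := hi
  rw [h2] at hr
  simp at hr
  rw [hr] at h0 h1
  have a : (0:ℤ) < n := by exact_mod_cast h0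
  have b : n < (1:ℤ) := by exact_mod_cast h1
  omega

lemma D_line_bound {c : ℝ} (h0 : 0 < c) (h1 : c < 1) :
    ∃ C : ℝ, 0 ≤ C ∧ ∀ t : ℝ, ‖(D (c + ep * t))⁻¹‖ ≤ C * Real.exp (-(π * (√2 / 2) * |t|)) := by
  have hcont : Continuous (fun t : ℝ => Real.exp (π * (√2 / 2) * |t|) * ‖(D (c + ep * t))⁻¹‖) := by
    refine Continuous.mul (by fun_prop) (Continuous.norm (Continuous.inv₀ ?_ (D_line_ne h0 h1)))
    exact D_cont.comp (by fun_prop)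
  obtain ⟨C, hC⟩ := (isCompact_Icc (a := (-2:ℝ)) (b := 2)).bddAbove_image hcont.continuousOn
  have main : ∀ t : ℝ, Real.exp (π * (√2 / 2) * |t|) * ‖(D (c + ep * t))⁻¹‖ ≤ max C 2 := by
    intro t
    by_cases ht : t ∈ Icc (-2:ℝ) 2
    · exact le_trans (hC (mem_image_of_mem _ ht)) (le_max_left _ _)
    · have ht' : 2 < |t| := by
        by_contra! h
        exact ht (abs_le.1 h)
      have hs : (1:ℝ) ≤ √2 := by rw [Real.one_le_sqrt]; norm_num
      have him : |((c : ℂ) + ep * t).im| = √2 / 2 * |t| := by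
        rw [line_im, abs_neg, abs_mul, abs_of_nonneg (by positivity)]
      have := D_lower' (c + ep * t) (by rw [him]; nlinarith)
      rw [him, ← mul_assoc] at this
      refine le_trans ?_ (le_max_right _ _)
      rw [norm_inv, ← div_eq_mul_inv, div_le_iff₀ (norm_pos_iff.2 (D_line_ne h0 h1 t))]
      linarith
  refine ⟨max C 2, le_trans zero_le_two (le_max_right _ _), fun t => ?_⟩
  rw [Real.exp_neg, ← div_eq_mul_inv, le_div_iff₀ (Real.exp_pos _), mul_comm]
  exact main t

/-- integrand -/
noncomputable def F (x u : ℂ) : ℂ := cexp (-((π : ℂ) * I * u ^ 2) - u * x) / D u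

lemma quad (x : ℂ) (c t : ℂ) : -((π : ℂ) * I * (c + ep * t) ^ 2) - (c + ep * t) * x =
    (-(π : ℂ)) * t ^ 2 + (-(ep * (2 * π * I * c + x))) * t + (-(π * I * c ^ 2) - c * x) := by
  linear_combination (-(π:ℂ) * I * t ^ 2) * ep_sq + (π : ℂ) * t ^ 2 * I_sq

lemma gauss_int (x : ℂ) (c : ℂ) : Integrable (fun t : ℝ =>
    cexp (-((π : ℂ) * I * (c + ep * t) ^ 2) - (c + ep * t) * x)) := by
  simp_rw [quad]
  exact integrable_cexp_quadratic' (by simpa using Real.pi_pos) _ _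

lemma Dinv_meas {c : ℝ} (h0 : 0 < c) (h1 : c < 1) :
    Continuous (fun t : ℝ => (D (c + ep * t))⁻¹) :=
  Continuous.inv₀ (D_cont.comp (by fun_prop)) (D_line_ne h0 h1)

lemma F_int {c : ℝ} (h0 : 0 < c) (h1 : c < 1) (x : ℂ) :
    Integrable (fun t : ℝ => F x (c + ep * t)) := by
  obtain ⟨C, hC0, hC⟩ := D_line_bound h0 h1
  have := (gauss_int x c).bdd_mul (c := C) (Dinv_meas h0 h1).aestronglyMeasurable
    (Eventually.of_forall fun t => (hC t).trans ?_)
  · refine this.congr (Eventually.of_forall fun t => ?_)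
    simp only [F]
    rw [div_eq_mul_inv, mul_comm]
  · have : Real.exp (-(π * (√2 / 2) * |t|)) ≤ 1 := by
      rw [Real.exp_le_one_iff]
      have := Real.pi_pos
      have : 0 ≤ π * (√2 / 2) * |t| := by positivity
      linarith
    nlinarith

/-- line integral (without the direction factor) -/
noncomputable def P (c : ℝ) (x : ℂ) : ℂ := ∫ t : ℝ, F x (c + ep * t)

lemma D_add_one (u : ℂ) : D (u + 1) = -D u := by
  have h : cexp ((π:ℂ) * I) = -1 := Complex.exp_pi_mul_I
  simp only [D, mul_add, mul_one, Complex.exp_add, neg_add, Complex.exp_neg, h]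
  norm_num; ring

lemma F_shift (x u : ℂ) : F x (u + 1) = cexp (-x) * F (x + 2 * π * I) u := by
  have h : cexp (-((π : ℂ) * I * (u + 1) ^ 2) - (u + 1) * x) =
      - (cexp (-x) * cexp (-((π : ℂ) * I * u ^ 2) - u * (x + 2 * π * I))) := by
    rw [← Complex.exp_add, show -((π : ℂ) * I * (u + 1) ^ 2) - (u + 1) * x =
      (-x + (-((π : ℂ) * I * u ^ 2) - u * (x + 2 * π * I))) + (-(π * I)) by ring,
      Complex.exp_add, Complex.exp_neg (π * I), Complex.exp_pi_mul_I]
    norm_num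
  rw [F, F, D_add_one, h, neg_div_neg_eq, mul_div_assoc]

lemma P_shift (c : ℝ) (x : ℂ) : P (c + 1) x = cexp (-x) * P c (x + 2 * π * I) := by
  rw [P, P, ← integral_const_mul]
  congr 1; ext t
  rw [← F_shift]; congr 1; push_cast; ring

lemma F_sub {u : ℂ} (x : ℂ) (hu : D u ≠ 0) :
    F x u - F (x + 2 * π * I) u = cexp (-((π : ℂ) * I * u ^ 2) - u * (x + π * I)) := by
  rw [F, F, ← sub_div, div_eq_iff hu, D, mul_sub, ← Complex.exp_add, ← Complex.exp_add]
  congr 2 <;> ring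

lemma P_sub {c : ℝ} (h0 : 0 < c) (h1 : c < 1) (x : ℂ) :
    ep * (P c x - P c (x + 2 * π * I)) = cexp (-(I * x ^ 2 / (4 * π)) + x / 2) := by
  rw [P, P, ← integral_sub (F_int h0 h1 _) (F_int h0 h1 _)]
  simp_rw [F_sub x (D_line_ne h0 h1 _), quad]
  have hp : (π : ℂ) ≠ 0 := ofReal_ne_zero.2 Real.pi_ne_zero
  rw [integral_cexp_quadratic (by simpa using Real.pi_pos), neg_neg, div_self hp, one_cpow, one_mul,
    ep, ← Complex.exp_add]
  congr 1
  have h2 : cexp (-((π:ℂ) * I / 4)) ^ 2 = -I := ep_sq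
  field_simp
  rw [h2]
  linear_combination 2 * (-I * π ^ 2 * (2 * c + 1) ^ 2 - 2 * π * (2 * c + 1) * x) * I_sq

lemma F_side (c : ℝ) (x : ℂ) : ∃ M : ℝ, ∀ τ y : ℝ, 0 ≤ y → y ≤ 1 → 3 ≤ |τ| →
    D (c + ep * (τ + y * I)) ≠ 0 ∧ ‖F x (c + ep * (τ + y * I))‖ ≤ Real.exp (M - |τ|) := by
  set k : ℂ := -(ep * (2 * π * I * c + x)) with hk
  set d : ℂ := -(π * I * c ^ 2) - c * x with hd
  refine ⟨π + ‖k‖ ^ 2 / 4 + ‖k‖ + ‖d‖, fun τ y hy0 hy1 hτ => ?_⟩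
  have him : ((c : ℂ) + ep * (τ + y * I)).im = √2 / 2 * (y - τ) := by
    simp [ep_im, ep_re]; ring
  have hs : (1:ℝ) ≤ √2 := by rw [Real.one_le_sqrt]; norm_num
  have hyt : 2 ≤ |y - τ| := by
    have h1 := abs_sub_abs_le_abs_sub τ y
    rw [abs_of_nonneg hy0, abs_sub_comm] at h1
    linarith
  have him1 : 1 ≤ |((c : ℂ) + ep * (τ + y * I)).im| := by
    rw [him, abs_mul, abs_of_nonneg (by positivity : 0 ≤ √2 / 2)]
    nlinarith
  have hD := D_lower' _ him1
  have hD1 : 1 ≤ ‖D (c + ep * (τ + y * I))‖ := by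
    refine le_trans ?_ hD
    have h3 := Real.add_one_le_exp (π * |((c : ℂ) + ep * (τ + y * I)).im|)
    have h4 := Real.pi_gt_three
    nlinarith
  refine ⟨norm_pos_iff.1 (by linarith), ?_⟩
  rw [F, norm_div]
  refine le_trans (div_le_self (norm_nonneg _) hD1) ?_
  rw [quad, Complex.norm_exp, Real.exp_le_exp, ← hk, ← hd, add_re, add_re]
  have e1 : (-(π:ℂ) * (τ + y * I) ^ 2).re = -π * (τ ^ 2 - y ^ 2) := by
    have : (-(π:ℂ) * (τ + y * I) ^ 2) = ((-π * (τ ^ 2 - y ^ 2) : ℝ) : ℂ)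
        + ((-2 * π * τ * y : ℝ) : ℂ) * I := by
      push_cast
      linear_combination (-(π:ℂ) * y ^ 2) * I_sq
    rw [this, add_re, ofReal_re, re_ofReal_mul, I_re, mul_zero, add_zero]
  have e2 : (k * (τ + y * I)).re ≤ ‖k‖ * (|τ| + 1) := by
    refine (Complex.re_le_norm _).trans ?_
    rw [norm_mul]
    gcongr
    refine (norm_add_le _ _).trans ?_
    simp [abs_of_nonneg hy0, hy1]
  have e3 : d.re ≤ ‖d‖ := Complex.re_le_norm _
  rw [e1]
  have h4 := Real.pi_gt_three
  have hsq : τ ^ 2 = |τ| ^ 2 := (sq_abs τ).symm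
  rw [hsq]
  have hy2 : y ^ 2 ≤ 1 := by nlinarith
  have e5 : -π * (|τ| ^ 2 - y ^ 2) ≤ -3 * |τ| ^ 2 + π := by
    nlinarith [sq_nonneg |τ|]
  nlinarith [sq_nonneg (|τ| - ‖k‖ / 2)]

lemma deriv_D_one : deriv D 1 ≠ 0 := by
  have h : HasDerivAt D (cexp ((π : ℂ) * I * 1) * ((π : ℂ) * I * 1) -
      cexp (-((π : ℂ) * I * 1)) * (-((π : ℂ) * I * 1))) 1 := by
    unfold D
    have h1 := (hasDerivAt_id (1:ℂ)).const_mul ((π : ℂ) * I)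
    exact h1.cexp.sub h1.fun_neg.cexp
  rw [h.deriv, mul_one, Complex.exp_neg, Complex.exp_pi_mul_I]
  have hp : (π : ℂ) * I ≠ 0 := mul_ne_zero (ofReal_ne_zero.2 Real.pi_ne_zero) I_ne_zero
  intro h0
  apply hp
  norm_num at h0
  linear_combination (-1/2) * h0

lemma D_one : D 1 = 0 := by
  simp [D, Complex.exp_neg, Complex.exp_pi_mul_I]
  
/-- numerator with the pole removed -/
noncomputable def N (x u : ℂ) : ℂ := cexp (-(u * x)) - cexp (-x)

/-- regularised integrand -/
noncomputable def H (x u : ℂ) : ℂ :=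
  cexp (-((π : ℂ) * I * u ^ 2)) * (dslope (N x) 1 u / dslope D 1 u)

lemma H_eq (x : ℂ) {u : ℂ} (hu : D u ≠ 0) : H x u = F x u - cexp (-x) * F 0 u := by
  have h1 : u ≠ 1 := fun h => hu (h ▸ D_one)
  have h2 : u - 1 ≠ 0 := sub_ne_zero.2 h1
  have h3 : N x 1 = 0 := by simp [N]
  rw [H, dslope_of_ne _ h1, dslope_of_ne _ h1, slope_def_field, slope_def_field, D_one, h3,
    F, F, N, sub_zero, sub_zero, mul_zero, sub_zero, sub_eq_add_neg _ (u * x), Complex.exp_add]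
  field_simp

lemma H_diff (x : ℂ) {u : ℂ} (hu : u = 1 ∨ D u ≠ 0) : DifferentiableAt ℂ (H x) u := by
  have hN : Differentiable ℂ (N x) := by unfold N; fun_prop
  have a1 : Differentiable ℂ (dslope (N x) 1) := by
    rw [← differentiableOn_univ, Complex.differentiableOn_dslope univ_mem]
    exact hN.differentiableOn
  have a2 : Differentiable ℂ (dslope D 1) := by
    rw [← differentiableOn_univ, Complex.differentiableOn_dslope univ_mem]
    exact D_diff.differentiableOn
  have hne : dslope D 1 u ≠ 0 := by
    by_cases h1 : u = 1
    · rw [h1, dslope_same]; exact deriv_D_one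
    · have h2 : D u ≠ 0 := by tauto
      rw [dslope_of_ne _ h1, slope_def_field, D_one, sub_zero]
      exact div_ne_zero h2 (sub_ne_zero.2 h1)
  unfold H
  exact DifferentiableAt.mul (by fun_prop) ((a1 u).fun_div (a2 u) hne)

lemma strip_ok {c : ℝ} (h0 : 0 < c) (h1 : c < 1) {z : ℂ} (hz0 : 0 ≤ z.im) (hz1 : z.im ≤ √2 / 2) :
    (c + ep * z) = 1 ∨ D (c + ep * z) ≠ 0 := by
  by_contra! hcon
  obtain ⟨hne, hD⟩ := hcon
  obtain ⟨n, hn⟩ := D_zero hD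
  have hi := congrArg Complex.im hn
  have hr := congrArg Complex.re hn
  simp [ep_re, ep_im] at hi hr
  have hs : (1:ℝ) ≤ √2 := by rw [Real.one_le_sqrt]; norm_num
  have hss : √2 * √2 = 2 := Real.mul_self_sqrt (by norm_num)
  have h3 : z.re = z.im := by nlinarith
  rw [h3] at hr
  have a : (0:ℝ) < n := by nlinarith
  have b : (n:ℝ) < 2 := by nlinarith
  have a' : (0:ℤ) < n := by exact_mod_cast a
  have b' : n < (2:ℤ) := by exact_mod_cast b
  have : n = 1 := by omega
  apply hne
  rw [hn, this]; simp

lemma top_line (t : ℝ) (c : ℝ) : (c : ℂ) + ep * (t + ((√2 / 2 : ℝ) : ℂ) * I) =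
    ((c : ℂ) + ep * ((t - √2 / 2 : ℝ) : ℂ)) + 1 := by
  have h : ep * (((√2 / 2 : ℝ) : ℂ) + ((√2 / 2 : ℝ) : ℂ) * I) = 1 := by
    rw [← ep_conj]; congr 1; rw [ep_eq, map_sub, map_mul, conj_I, conj_ofReal]; ring
  rw [← h]
  push_cast; ring

lemma F_int_add_one {c : ℝ} (h0 : 0 < c) (h1 : c < 1) (x : ℂ) :
    Integrable (fun t : ℝ => F x ((c + ep * t) + 1)) := by
  simp_rw [F_shift]
  exact (F_int h0 h1 _).const_mul _

lemma P_jump {c : ℝ} (h0 : 0 < c) (h1 : c < 1) (x : ℂ) :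
    P c x - cexp (-x) * P c 0 = P (c + 1) x - cexp (-x) * P (c + 1) 0 := by
  have i1 : Integrable (fun t : ℝ => H x (c + ep * t)) := by
    simp_rw [H_eq x (D_line_ne h0 h1 _)]
    exact (F_int h0 h1 _).sub ((F_int h0 h1 _).const_mul _)
  have e1 : ∫ t : ℝ, H x (c + ep * t) = P c x - cexp (-x) * P c 0 := by
    simp_rw [H_eq x (D_line_ne h0 h1 _)]
    rw [integral_sub (F_int h0 h1 _) ((F_int h0 h1 _).const_mul _), integral_const_mul]
    rfl
  have hD1 : ∀ t : ℝ, D ((c + ep * t) + 1) ≠ 0 := fun t => by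
    rw [D_add_one]; exact neg_ne_zero.2 (D_line_ne h0 h1 t)
  have i2' : Integrable (fun t : ℝ => H x ((c + ep * t) + 1)) := by
    simp_rw [H_eq x (hD1 _)]
    exact (F_int_add_one h0 h1 _).sub ((F_int_add_one h0 h1 _).const_mul _)
  have hP : ∀ x, P (c + 1) x = ∫ t : ℝ, F x ((c + ep * t) + 1) := fun x => by
    rw [P]; congr 1; ext t; congr 1; push_cast; ring
  have e2' : ∫ t : ℝ, H x ((c + ep * t) + 1) = P (c + 1) x - cexp (-x) * P (c + 1) 0 := by
    simp_rw [H_eq x (hD1 _)]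
    rw [integral_sub (F_int_add_one h0 h1 _) ((F_int_add_one h0 h1 _).const_mul _),
      integral_const_mul, hP, hP]
  have i2 : Integrable (fun t : ℝ => H x (c + ep * (t + ((√2 / 2 : ℝ) : ℂ) * I))) := by
    simp_rw [top_line]
    exact i2'.comp_sub_right (√2 / 2)
  have e2 : ∫ t : ℝ, H x (c + ep * (t + ((√2 / 2 : ℝ) : ℂ) * I)) =
      P (c + 1) x - cexp (-x) * P (c + 1) 0 := by
    simp_rw [top_line]
    rw [← e2']
    exact integral_sub_right_eq_self (fun t : ℝ => H x ((c + ep * t) + 1)) (√2 / 2)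
  have hs0 : 0 ≤ √2 / 2 := by positivity
  have hs1 : √2 / 2 ≤ 1 := by
    have : √2 ≤ 2 := by rw [Real.sqrt_le_left (by norm_num)]; norm_num
    linarith
  obtain ⟨M₁, hM₁⟩ := F_side c x
  obtain ⟨M₂, hM₂⟩ := F_side c 0
  set K : ℝ := Real.exp M₁ + ‖cexp (-x)‖ * Real.exp M₂ with hK
  have hside : ∀ τ y : ℝ, 0 ≤ y → y ≤ 1 → 3 ≤ |τ| →
      ‖H x (c + ep * (τ + y * I))‖ ≤ K * Real.exp (-|τ|) := by
    intro τ y hy0 hy1 hτ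
    obtain ⟨d1, b1⟩ := hM₁ τ y hy0 hy1 hτ
    obtain ⟨d2, b2⟩ := hM₂ τ y hy0 hy1 hτ
    rw [H_eq x d1]
    refine (norm_sub_le _ _).trans ?_
    rw [norm_mul, hK, add_mul, mul_assoc, ← Real.exp_add, ← Real.exp_add, ← sub_eq_add_neg,
      ← sub_eq_add_neg]
    gcongr
  have side_lim : ∀ σ : ℝ, |σ| = 1 → Tendsto (fun T : ℝ =>
      I • ∫ y : ℝ in (0:ℝ)..(√2 / 2), H x (c + ep * (((σ * T : ℝ) : ℂ) + y * I))) atTop (𝓝 0) := by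
    intro σ hσ
    rw [tendsto_zero_iff_norm_tendsto_zero]
    have lim : Tendsto (fun T : ℝ => K * Real.exp (-T) * |√2 / 2 - 0|) atTop (𝓝 0) := by
      have := ((Real.tendsto_exp_neg_atTop_nhds_zero).const_mul K).mul_const |√2 / 2 - 0|
      simpa using this
    refine squeeze_zero' (Eventually.of_forall fun T => norm_nonneg _) ?_ lim
    filter_upwards [eventually_ge_atTop (3:ℝ)] with T hT
    rw [norm_smul, norm_I, one_mul]
    have habs : |σ * T| = T := by rw [abs_mul, hσ, one_mul, abs_of_nonneg (by linarith)]
    refine intervalIntegral.norm_integral_le_of_norm_le_const fun y hy => ?_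
    rw [uIoc_of_le hs0] at hy
    have := hside (σ * T) y hy.1.le (hy.2.trans hs1) (by rw [habs]; exact hT)
    rwa [habs] at this
  have rect : ∀ T : ℝ, 0 ≤ T →
      (∫ t : ℝ in -T..T, H x (c + ep * t)) -
      (∫ t : ℝ in -T..T, H x (c + ep * (t + ((√2 / 2 : ℝ) : ℂ) * I))) +
      (I • ∫ y : ℝ in (0:ℝ)..(√2 / 2), H x (c + ep * (((1 * T : ℝ) : ℂ) + y * I))) -
      (I • ∫ y : ℝ in (0:ℝ)..(√2 / 2), H x (c + ep * ((((-1) * T : ℝ) : ℂ) + y * I))) = 0 := by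
    intro T hT
    have := Complex.integral_boundary_rect_eq_zero_of_differentiableOn
      (fun z => H x (c + ep * z)) ⟨-T, 0⟩ ⟨T, √2 / 2⟩ ?_
    · simpa using this
    · intro z hz
      have hz2 : z.im ∈ uIcc (0:ℝ) (√2 / 2) := hz.2
      rw [uIcc_of_le hs0] at hz2
      have hd := H_diff x (strip_ok h0 h1 hz2.1 hz2.2)
      have hl : DifferentiableAt ℂ (fun z : ℂ => (c : ℂ) + ep * z) z := by fun_prop
      exact (DifferentiableAt.comp (g := H x) (f := fun z : ℂ => (c : ℂ) + ep * z) z hd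
        hl).differentiableWithinAt
  have l1 := intervalIntegral_tendsto_integral i1 tendsto_neg_atTop_atBot tendsto_id
  have l2 := intervalIntegral_tendsto_integral i2 tendsto_neg_atTop_atBot tendsto_id
  have lim := ((l1.sub l2).add (side_lim 1 (by simp))).sub (side_lim (-1) (by simp))
  have lim0 : Tendsto (fun _ : ℝ => (0:ℂ)) atTop (𝓝 0) := tendsto_const_nhds
  have := tendsto_nhds_unique (lim.congr' (by
    filter_upwards [eventually_ge_atTop (0:ℝ)] with T hT
    exact rect T hT)) lim0
  rw [e1, e2] at this
  linear_combination this

lemma P_closed {c : ℝ} (h0 : 0 < c) (h1 : c < 1) (x : ℂ) :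
    (cexp x - 1) * (ep * P c x) = 1 - cexp (-(I * x ^ 2 / (4 * π)) + x / 2) := by
  have a := P_jump h0 h1 x
  have b := P_sub h0 h1 x
  have b0 := P_sub h0 h1 0
  rw [P_shift, P_shift] at a
  simp at b0
  have ex : cexp x * cexp (-x) = 1 := by rw [← Complex.exp_add]; simp
  simp at a
  generalize cexp (-(I * x ^ 2 / (4 * π)) + x / 2) = G at *
  linear_combination cexp x * ep * a - b + (ep * (P c (x + 2 * π * I) + P c 0 - P c (2 * π * I))) * ex + b0

lemma exp_abs_int : Integrable (fun t : ℝ => Real.exp (-(π * (√2 / 2) * |t|))) := by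
  refine Integrable.mono' integrable_inv_one_add_sq (by fun_prop) (Eventually.of_forall fun t => ?_)
  rw [Real.norm_of_nonneg (Real.exp_pos _).le, Real.exp_neg]
  have hp := Real.pi_gt_three
  have hs : (1:ℝ) ≤ √2 := by rw [Real.one_le_sqrt]; norm_num
  have hss : √2 * √2 = 2 := Real.mul_self_sqrt (by norm_num)
  have h0 : 0 ≤ π * (√2 / 2) * |t| := by positivity
  have h := Real.quadratic_le_exp_of_nonneg h0
  apply inv_anti₀ (by positivity)
  have e : (π * (√2 / 2) * |t|) ^ 2 / 2 = π ^ 2 / 4 * t ^ 2 := by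
    rw [mul_pow, mul_pow, sq_abs, div_pow, sq √2, hss]; ring
  have : t ^ 2 ≤ π ^ 2 / 4 * t ^ 2 := by
    have : 1 ≤ π ^ 2 / 4 := by nlinarith
    nlinarith [sq_nonneg t]
  linarith

lemma fubini (s : ℂ) (hs : s.re < 1) (G : ℝ → ℝ → ℂ) (hG : Continuous (Function.uncurry G))
    (g : ℝ → ℝ) (hg : Integrable g) (b : ℝ) (hb : 0 < b)
    (hbd : ∀ t w : ℝ, 0 < w → ‖G t w‖ ≤ g t * Real.exp (-(b * w))) :
    ∫ t : ℝ, ∫ w : ℝ in Ioi 0, (w : ℂ) ^ (-s) * G t w =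
      ∫ w : ℝ in Ioi 0, (w : ℂ) ^ (-s) * ∫ t : ℝ, G t w := by
  rw [integral_integral_swap]
  · simp_rw [integral_const_mul]
  · have hw := weight_int (-s).re b (by simpa using hs) hb
    refine Integrable.mono' (hg.mul_prod hw) ?_ ?_
    · exact ((cpow_meas (-s)).comp_snd).mul hG.aestronglyMeasurable
    · have hmem : ∀ᵐ p : ℝ × ℝ ∂(volume.prod (volume.restrict (Ioi (0:ℝ)))), p.2 ∈ Ioi (0:ℝ) :=
        Measure.quasiMeasurePreserving_snd.ae (ae_restrict_mem measurableSet_Ioi)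
      filter_upwards [hmem] with p hp
      have hp' : 0 < p.2 := hp
      simp only [Function.uncurry]
      rw [norm_mul, norm_cpow_eq_rpow_re_of_pos hp']
      have := hbd p.1 p.2 hp'
      have h0 : 0 ≤ p.2 ^ (-s).re := by positivity
      nlinarith

/-- The spectral variable `√(2π) e^{-iπ/4} w`. -/
noncomputable def xw (w : ℝ) : ℂ := (Real.sqrt (2 * π) : ℂ) * ep * w

lemma sqrt_two_pi : Real.sqrt (2 * π) = √2 * √π := Real.sqrt_mul (by norm_num) _

lemma xw_re (w : ℝ) : (xw w).re = √π * w := by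
  have hss : √2 * √2 = 2 := Real.mul_self_sqrt (by norm_num)
  rw [xw, re_mul_ofReal, re_ofReal_mul, ep_re, sqrt_two_pi]
  linear_combination √π * w / 2 * hss

lemma xw_sq (w : ℝ) : I * xw w ^ 2 / (4 * π) = (w : ℂ) ^ 2 / 2 := by
  have hp : (π : ℂ) ≠ 0 := ofReal_ne_zero.2 Real.pi_ne_zero
  have h : ((Real.sqrt (2 * π) : ℝ) : ℂ) ^ 2 = 2 * π := by
    rw [← ofReal_pow, Real.sq_sqrt (by positivity)]; push_cast; ring
  rw [xw, mul_pow, mul_pow, h, ep_sq]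
  field_simp
  linear_combination (-4 * (w:ℂ) ^ 2) * I_sq

lemma F_cont {c : ℝ} (h0 : 0 < c) (h1 : c < 1) {f : ℝ → ℂ} (hf : Continuous f) :
    Continuous (fun p : ℝ × ℝ => F (f p.2) (c + ep * p.1)) := by
  unfold F
  simp_rw [div_eq_mul_inv]
  exact Continuous.mul (by fun_prop) ((Dinv_meas h0 h1).comp continuous_fst)

lemma xw_cont : Continuous xw := by unfold xw; fun_prop

lemma log_line {c : ℝ} (h0 : 0 < c) (t : ℝ) :
    0 < (ep * (c + ep * t)).re ∧
    Complex.log (c + ep * t) = Complex.log (ep * (c + ep * t)) + π * I / 4 := by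
  have hre : 0 < (ep * (c + ep * t)).re := by
    have : ep * (c + ep * t) = ep * c + (-I) * t := by rw [← ep_sq]; ring
    rw [this]
    simp [ep_re]
    positivity
  refine ⟨hre, ?_⟩
  set v := ep * (c + ep * t) with hv
  have hv0 : v ≠ 0 := by
    intro h; rw [h] at hre; simp at hre
  have harg := abs_lt.1 (Complex.abs_arg_lt_pi_div_two_iff.2 (Or.inl hre))
  have hp := Real.pi_pos
  have hu : (c + ep * t : ℂ) = cexp (Complex.log v + π * I / 4) := by
    rw [Complex.exp_add, Complex.exp_log hv0, hv]
    have : ep * cexp (π * I / 4) = 1 := by rw [ep, ← Complex.exp_add]; simp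
    linear_combination (-(c + ep * t)) * this
  have him : (Complex.log v + π * I / 4).im = v.arg + π / 4 := by
    have : (Complex.log v + π * I / 4) = Complex.log v + ((π / 4 : ℝ) : ℂ) * I := by
      push_cast; ring
    rw [this, add_im, Complex.log_im, im_ofReal_mul, I_im, mul_one]
  rw [hu, Complex.log_exp] <;> rw [him] <;> linarith

lemma pow_rep (s : ℂ) (hs : s.re < 1) {c : ℝ} (h0 : 0 < c) (t : ℝ) :
    (c + ep * t) ^ (s - 1) * ep =
      (2 * (π : ℂ)) ^ ((1 - s) / 2) * Complex.exp (-((π : ℂ) * Complex.I * (2 - s) / 4)) *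
      (Complex.Gamma (1 - s))⁻¹ *
      ∫ w : ℝ in Ioi 0, (w : ℂ) ^ (-s) * cexp (-((c + ep * t) * xw w)) := by
  obtain ⟨hre, hlog⟩ := log_line h0 t
  set u : ℂ := c + ep * t with hu
  set v := ep * u with hv
  have hsq : 0 < Real.sqrt (2 * π) := by positivity
  have hv0 : v ≠ 0 := by
    intro h; rw [h] at hre; simp at hre
  have hu0 : u ≠ 0 := by
    intro h; apply hv0; rw [hv, h, mul_zero]
  have hG : Complex.Gamma (1 - s) ≠ 0 := Complex.Gamma_ne_zero_of_re_pos (by simpa using hs)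
  have hr : 0 < ((Real.sqrt (2 * π) : ℂ) * v).re := by
    rw [re_ofReal_mul]; positivity
  have key := gamma_complex (1 - s) ((Real.sqrt (2 * π) : ℂ) * v) (by simpa using hs) hr
  have e1 : ∀ w : ℝ, (w : ℂ) ^ (-s) * cexp (-(u * xw w)) =
      (w : ℂ) ^ (1 - s - 1) * cexp (-((Real.sqrt (2 * π) : ℂ) * v * w)) := fun w => by
    congr 2
    · ring
    · rw [xw, hv]; ring
  simp_rw [e1]
  rw [key]
  have hr0 : (Real.sqrt (2 * π) : ℂ) * v ≠ 0 := by
    intro h; rw [h] at hr; simp at hr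
  have h2p : (2 * (π : ℂ)) ≠ 0 := by
    simp [Real.pi_ne_zero]
  have hl2 : Complex.log (2 * (π : ℂ)) = ((Real.log (2 * π) : ℝ) : ℂ) := by
    rw [Complex.ofReal_log (by positivity)]; push_cast; rfl
  rw [cpow_def_of_ne_zero hu0, cpow_def_of_ne_zero hr0, cpow_def_of_ne_zero h2p, hl2,
    Complex.log_ofReal_mul hsq hv0, Real.log_sqrt (by positivity), hlog, ep]
  have : ∀ A B C G : ℂ, G ≠ 0 → A * B * G⁻¹ * (C * G) = A * B * C := fun A B C G h => by
    field_simp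
  rw [this _ _ _ _ hG, ← Complex.exp_add, ← Complex.exp_add, ← Complex.exp_add]
  congr 1
  push_cast; ring

lemma lhs_bound (c t w : ℝ) : ‖F (xw w) (c + ep * t)‖ =
    ‖F 0 (c + ep * t)‖ * Real.exp (-(√π * c * w)) := by
  have : F (xw w) (c + ep * t) = F 0 (c + ep * t) * cexp (-((c + ep * t) * xw w)) := by
    rw [F, F, mul_zero, sub_zero, sub_eq_add_neg, Complex.exp_add]; ring
  rw [this, norm_mul, Complex.norm_exp]
  congr 2
  have : (c + ep * t) * xw w = (c : ℂ) * xw w + ((Real.sqrt (2 * π) * t * w : ℝ) : ℂ) * (-I) := by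
    rw [← ep_sq, xw]; push_cast; ring
  rw [this, neg_re, add_re, re_ofReal_mul, xw_re, re_ofReal_mul]
  simp; ring

lemma lhs_eq (s : ℂ) (hs : s.re < 1) {c : ℝ} (h0 : 0 < c) (h1 : c < 1) :
    ∫ t : ℝ, (cexp (-((π : ℂ) * I * (c + ep * t) ^ 2)) * (c + ep * t) ^ (s - 1) /
        D (c + ep * t)) * ep =
      (2 * (π : ℂ)) ^ ((1 - s) / 2) * Complex.exp (-((π : ℂ) * Complex.I * (2 - s) / 4)) *
      (Complex.Gamma (1 - s))⁻¹ * ∫ w : ℝ in Ioi 0, (w : ℂ) ^ (-s) * P c (xw w) := by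
  have := fubini s hs (fun t w => F (xw w) (c + ep * t)) (F_cont h0 h1 xw_cont)
    (fun t => ‖F 0 (c + ep * t)‖) (F_int h0 h1 0).norm (√π * c) (by positivity)
    (fun t w _ => (lhs_bound c t w).le)
  simp only [P]
  rw [← this, ← integral_const_mul]
  congr 1; ext t
  have e : ∀ w : ℝ, (w : ℂ) ^ (-s) * F (xw w) (c + ep * t) =
      (cexp (-((π : ℂ) * I * (c + ep * t) ^ 2)) / D (c + ep * t)) *
      ((w : ℂ) ^ (-s) * cexp (-((c + ep * t) * xw w))) := fun w => by
    rw [F, sub_eq_add_neg, Complex.exp_add]; ring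
  simp_rw [e]
  rw [integral_const_mul]
  have h2 := pow_rep s hs h0 t
  linear_combination (cexp (-((π : ℂ) * I * (c + ep * t) ^ 2)) / D (c + ep * t)) * h2

lemma D_conj (u : ℂ) : D ((starRingEnd ℂ) u) = -(starRingEnd ℂ) (D u) := by
  simp only [D, map_sub, ← Complex.exp_conj, map_mul, map_neg, conj_I, conj_ofReal]
  rw [neg_sub]
  congr 2 <;> ring

lemma kernel (x v : ℂ) : cexp ((π : ℂ) * I * (1 / 2 - (starRingEnd ℂ) v) ^ 2) /
      (cexp (2 * (π : ℂ) * I * (1 / 2 - (starRingEnd ℂ) v)) + 1) *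
      cexp (-(x * (1 / 2 - (starRingEnd ℂ) v))) =
    (starRingEnd ℂ) (F (-(starRingEnd ℂ) x) v) * (-cexp (π * I / 4 - x / 2)) := by
  have hF : (starRingEnd ℂ) (F (-(starRingEnd ℂ) x) v) =
      - (cexp ((π : ℂ) * I * (starRingEnd ℂ) v ^ 2 + (starRingEnd ℂ) v * x) /
        D ((starRingEnd ℂ) v)) := by
    rw [D_conj, div_neg, neg_neg, F, map_div₀, ← Complex.exp_conj]
    congr 2
    simp only [map_sub, map_mul, map_neg, map_pow, conj_I, conj_ofReal, Complex.conj_conj]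
    ring
  rw [hF]
  set y := (starRingEnd ℂ) v
  have hden : cexp (2 * (π : ℂ) * I * (1 / 2 - y)) + 1 = cexp (-(π * I * y)) * D y := by
    have e0 : cexp (-(π * I * y)) * cexp (π * I * y) = 1 := by rw [← Complex.exp_add]; simp
    rw [D,
      show 2 * (π : ℂ) * I * (1 / 2 - y) = -(π * I * y) + -(π * I * y) + π * I by ring,
      Complex.exp_add, Complex.exp_add, Complex.exp_pi_mul_I]
    linear_combination -e0
  rw [hden, neg_mul_neg]
  have hne := Complex.exp_ne_zero (-(π * I * y))
  have hnum : cexp ((π : ℂ) * I * (1 / 2 - y) ^ 2) * cexp (-(x * (1 / 2 - y))) =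
      cexp (-(π * I * y)) * (cexp ((π : ℂ) * I * y ^ 2 + y * x) * cexp (π * I / 4 - x / 2)) := by
    simp only [← Complex.exp_add]
    congr 1; ring
  calc _ = (cexp ((π : ℂ) * I * (1 / 2 - y) ^ 2) * cexp (-(x * (1 / 2 - y)))) /
        (cexp (-(π * I * y)) * D y) := by ring
    _ = _ := by rw [hnum, mul_div_mul_left _ _ hne]; ring

/-- the kernel on the right-hand side -/
noncomputable def Q (κ t w : ℝ) : ℂ :=
  (starRingEnd ℂ) (F (-(starRingEnd ℂ) (xw w)) (κ + ep * t)) *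
    (cexp (-((w : ℂ) ^ 2 / 2)) * (-cexp (π * I / 4 - xw w / 2)))

lemma Q_bound {κ : ℝ} (h0 : 0 < κ) (h1 : κ < 1) : ∃ C : ℝ, ∀ t w : ℝ, 0 < w →
    ‖Q κ t w‖ ≤ (C * Real.exp (-(π * (√2 / 2) * |t|))) * Real.exp (-(√π / 2 * w)) := by
  obtain ⟨C, hC0, hC⟩ := D_line_bound h0 h1
  refine ⟨C * Real.exp (π * κ ^ 2 / 2), fun t w hw => ?_⟩
  have hss : √2 * √2 = 2 := Real.mul_self_sqrt (by norm_num)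
  have hpp : √π * √π = π := Real.mul_self_sqrt Real.pi_pos.le
  have n1 : ‖cexp (-((w : ℂ) ^ 2 / 2))‖ = Real.exp (-(w ^ 2 / 2)) := by
    rw [show -((w : ℂ) ^ 2 / 2) = ((-(w ^ 2 / 2) : ℝ) : ℂ) by push_cast; ring,
      Complex.norm_exp, ofReal_re]
  have n2 : ‖-cexp (π * I / 4 - xw w / 2)‖ = Real.exp (-(√π * w / 2)) := by
    rw [norm_neg, Complex.norm_exp]
    congr 1
    rw [show π * I / 4 - xw w / 2 = ((π / 4 : ℝ) : ℂ) * I - ((1 / 2 : ℝ) : ℂ) * xw w by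
      push_cast; ring, sub_re, re_ofReal_mul, re_ofReal_mul, I_re, xw_re]
    ring
  have n3 : ‖F (-(starRingEnd ℂ) (xw w)) (κ + ep * t)‖ =
      Real.exp (-π * t ^ 2 - √2 * π * κ * t + √2 * √π * w * t + κ * √π * w) *
        ‖(D (κ + ep * t))⁻¹‖ := by
    rw [F, div_eq_mul_inv, norm_mul, Complex.norm_exp]
    congr 2
    have hx : ep * (starRingEnd ℂ) (xw w) = ((√2 * √π * w : ℝ) : ℂ) := by
      rw [xw, map_mul, map_mul, conj_ofReal, conj_ofReal, sqrt_two_pi]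
      push_cast
      linear_combination (√2 * √π * w : ℂ) * ep_conj
    have hq : -((π : ℂ) * I * (κ + ep * t) ^ 2) - (κ + ep * t) * (-(starRingEnd ℂ) (xw w)) =
        ((-π * t ^ 2 + √2 * √π * w * t : ℝ) : ℂ) - ((2 * π * κ * t : ℝ) : ℂ) * (ep * I)
          - ((π * κ ^ 2 : ℝ) : ℂ) * I + (κ : ℂ) * (starRingEnd ℂ) (xw w) := by
      rw [quad]
      push_cast at hx ⊢
      linear_combination (t : ℂ) * hx
    rw [hq, add_re, sub_re, sub_re, ofReal_re, re_ofReal_mul, re_ofReal_mul, re_ofReal_mul, I_re,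
      conj_re, xw_re]
    simp [ep_im]
    ring
  rw [Q, norm_mul, norm_mul, Complex.norm_conj, n1, n2, n3]
  calc _ ≤ Real.exp (-π * t ^ 2 - √2 * π * κ * t + √2 * √π * w * t + κ * √π * w) *
        (C * Real.exp (-(π * (√2 / 2) * |t|))) *
        (Real.exp (-(w ^ 2 / 2)) * Real.exp (-(√π * w / 2))) := by
          gcongr; exact hC t
    _ = C * Real.exp (-(π * (√2 / 2) * |t|)) * (Real.exp
        (-π * t ^ 2 - √2 * π * κ * t + √2 * √π * w * t + κ * √π * w + -(w ^ 2 / 2)) *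
          Real.exp (-(√π * w / 2))) := by
          rw [Real.exp_add _ (-(w ^ 2 / 2))]; ring
    _ ≤ C * Real.exp (-(π * (√2 / 2) * |t|)) * (Real.exp (π * κ ^ 2 / 2) *
          Real.exp (-(√π / 2 * w))) := by
          gcongr
          · have hr := sq_nonneg ((√π * t - √2 / 2 * w) + √2 / 2 * κ * √π)
            have : ((√π * t - √2 / 2 * w) + √2 / 2 * κ * √π) ^ 2 =
              π * κ ^ 2 / 2 - (-π * t ^ 2 - √2 * π * κ * t + √2 * √π * w * t + κ * √π * w
                + -(w ^ 2 / 2)) := by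
              linear_combination (t ^ 2 + √2 * κ * t + κ ^ 2 / 2) * hpp +
                (w ^ 2 / 4 + κ ^ 2 * √π ^ 2 / 4 - κ * √π * w / 2) * hss
            linarith
          · exact le_of_eq (by ring)
    _ = _ := by ring

lemma Q_cont {κ : ℝ} (h0 : 0 < κ) (h1 : κ < 1) : Continuous (Function.uncurry (Q κ)) := by
  have h : Continuous (fun w => -(starRingEnd ℂ) (xw w)) :=
    (Complex.continuous_conj.comp xw_cont).neg
  have h2 := xw_cont
  refine Continuous.mul (Complex.continuous_conj.comp (F_cont h0 h1 h)) ?_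
  fun_prop

/-- `e^{-3iπ/4}` -/
lemma e3_eq : cexp (((-(3 * π / 4) : ℝ) : ℂ) * I) = -(starRingEnd ℂ) ep := by
  rw [ep, ← Complex.exp_conj]
  have : ((-(3 * π / 4) : ℝ) : ℂ) * I = (starRingEnd ℂ) (-((π : ℂ) * I / 4)) + -(π * I) := by
    simp only [map_neg, map_div₀, map_mul, conj_I, conj_ofReal, Complex.conj_ofNat]
    push_cast; ring
  rw [this, Complex.exp_add, Complex.exp_neg (π * I), Complex.exp_pi_mul_I]
  norm_num

lemma final_pt {c κ : ℝ} (h0 : 0 < c) (h1 : c < 1) (k0 : 0 < κ) (k1 : κ < 1) {w : ℝ}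
    (hw : 0 < w) : P c (xw w) = (∫ t : ℝ, Q κ t w) * (-(starRingEnd ℂ) ep) := by
  simp only [Q]
  rw [integral_mul_const, integral_conj]
  change _ = (starRingEnd ℂ) (P κ (-(starRingEnd ℂ) (xw w))) * _ * _
  have A := P_closed h0 h1 (xw w)
  have B := congrArg (starRingEnd ℂ) (P_closed k0 k1 (-(starRingEnd ℂ) (xw w)))
  have hBx : (starRingEnd ℂ) (-(I * (-(starRingEnd ℂ) (xw w)) ^ 2 / (4 * π)) +
      (-(starRingEnd ℂ) (xw w)) / 2) = I * xw w ^ 2 / (4 * π) - xw w / 2 := by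
    simp only [map_neg, map_div₀, map_mul, map_add, map_pow, conj_I, conj_ofReal,
      Complex.conj_ofNat, Complex.conj_conj]
    ring
  simp only [map_mul, map_sub, map_one] at B
  rw [← Complex.exp_conj, ← Complex.exp_conj, hBx, map_neg, Complex.conj_conj] at B
  rw [xw_sq] at A B
  have hne : cexp (xw w) - 1 ≠ 0 := by
    intro h
    have h2 := congrArg norm (sub_eq_zero.1 h)
    rw [Complex.norm_exp, xw_re, norm_one, Real.exp_eq_one_iff] at h2
    have : 0 < √π * w := by positivity
    linarith
  have hη : cexp (π * I / 4) = (starRingEnd ℂ) ep := by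
    rw [ep, ← Complex.exp_conj]
    congr 1
    simp only [map_neg, map_div₀, map_mul, conj_I, conj_ofReal, Complex.conj_ofNat]
    ring
  have eη := ep_conj
  have eX : cexp (xw w) = cexp (xw w / 2) ^ 2 := by
    rw [← Complex.exp_nat_mul]; congr 1; push_cast; ring
  have eY : cexp (-xw w) = cexp (-(xw w / 2)) ^ 2 := by
    rw [← Complex.exp_nat_mul]; congr 1; push_cast; ring
  have eXY : cexp (xw w / 2) * cexp (-(xw w / 2)) = 1 := by rw [← Complex.exp_add]; simp
  have eq : cexp ((w:ℂ) ^ 2 / 2) * cexp (-((w:ℂ) ^ 2 / 2)) = 1 := by rw [← Complex.exp_add]; simp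
  rw [sub_eq_add_neg _ (xw w / 2), Complex.exp_add, eY] at B
  rw [Complex.exp_add, eX] at A
  rw [sub_eq_add_neg _ (xw w / 2), Complex.exp_add, hη]
  rw [eX] at hne
  generalize (starRingEnd ℂ) (P κ (-(starRingEnd ℂ) (xw w))) = P' at *
  generalize P c (xw w) = P at *
  generalize cexp (-(xw w / 2)) = Y at *
  generalize cexp (xw w / 2) = X at *
  generalize cexp (-((w:ℂ) ^ 2 / 2)) = q at *
  generalize cexp ((w:ℂ) ^ 2 / 2) = q' at *
  generalize (starRingEnd ℂ) ep = η at *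
  apply mul_left_cancel₀ hne
  apply mul_left_cancel₀ ep_ne
  have g1 : ep * ((X ^ 2 - 1) * (P' * (q * -(η * Y)) * -η)) = -q * X * ((Y ^ 2 - 1) * (η * P')) := by
    linear_combination ((X ^ 2 - 1) * P' * q * η * Y) * eη + (q * X * η * P' + q * Y * η * P') * eXY
  rw [g1]
  linear_combination A + q * X * B - q * q' * eXY - eq

end RSaux

/-- Conjugate form: representation of `∫_{0↘1} e^{-iπu²} u^{s-1}/(e^{iπu} - e^{-iπu}) du`
by an integral over the line `-1/2 ↙ 1/2` whose kernel is the real integral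
representation of `U(1/2 - s, √(2π) e^{-iπ/4} u)`. -/
theorem riemann_siegel_parabolic_cylinder_conj (s : ℂ) (hs : s.re < 1)
    (c c' : ℝ) (hc : 0 < c) (hc' : c < 1) (hc₁ : -(1/2) < c') (hc₂ : c' < 1/2) :
    lineInt c (-(π/4)) (fun u =>
      Complex.exp (-((π : ℂ) * Complex.I * u ^ 2)) * u ^ (s - 1) /
        (Complex.exp ((π : ℂ) * Complex.I * u) - Complex.exp (-((π : ℂ) * Complex.I * u)))) =
    (2 * (π : ℂ)) ^ ((1 - s) / 2) * Complex.exp (-((π : ℂ) * Complex.I * (2 - s) / 4)) *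
      (Complex.Gamma (1 - s))⁻¹ *
      lineInt c' (-(3 * π / 4)) (fun u =>
        Complex.exp ((π : ℂ) * Complex.I * u ^ 2) /
          (Complex.exp (2 * (π : ℂ) * Complex.I * u) + 1) *
        ∫ w in Set.Ioi (0 : ℝ),
          Complex.exp (-((w : ℂ) ^ 2 / 2) -
              (Real.sqrt (2 * π) : ℂ) * Complex.exp (-((π : ℂ) * Complex.I / 4)) * u * (w : ℂ)) *
            (w : ℂ) ^ (-s)) := by
  have hep : Complex.exp (((-(π/4) : ℝ) : ℂ) * Complex.I) = RSaux.ep := by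
    rw [RSaux.ep]; congr 1; push_cast; ring
  unfold lineInt
  rw [hep, RSaux.e3_eq]
  refine (RSaux.lhs_eq s hs hc hc').trans ?_
  congr 1
  obtain ⟨κ, hκ⟩ : ∃ κ : ℝ, κ = 1 / 2 - c' := ⟨_, rfl⟩
  have k0 : 0 < κ := by linarith
  have k1 : κ < 1 := by linarith
  obtain ⟨C, hC⟩ := RSaux.Q_bound k0 k1
  have hf := RSaux.fubini s hs (RSaux.Q κ) (RSaux.Q_cont k0 k1) _
    (RSaux.exp_abs_int.const_mul C) (√π / 2) (by positivity) hC
  have step : ∫ w : ℝ in Ioi 0, (w : ℂ) ^ (-s) * RSaux.P c (RSaux.xw w) =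
      (∫ w : ℝ in Ioi 0, (w : ℂ) ^ (-s) * ∫ t : ℝ, RSaux.Q κ t w) *
        (-(starRingEnd ℂ) RSaux.ep) := by
    rw [← integral_mul_const]
    refine setIntegral_congr_fun measurableSet_Ioi fun w hw => ?_
    rw [RSaux.final_pt hc hc' k0 k1 hw, mul_assoc]
  rw [step, ← hf, ← integral_mul_const]
  congr 1; ext t
  congr 1
  have hu : (c' : ℂ) + -(starRingEnd ℂ) RSaux.ep * t =
      1 / 2 - (starRingEnd ℂ) (κ + RSaux.ep * t) := by
    rw [hκ]
    simp only [map_add, map_mul, conj_ofReal]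
    push_cast; ring
  rw [hu]
  beta_reduce
  rw [← integral_const_mul]
  congr 1; ext w
  have hk := RSaux.kernel (RSaux.xw w) (κ + RSaux.ep * t)
  rw [RSaux.Q]
  rw [sub_eq_add_neg (-((w : ℂ) ^ 2 / 2)), Complex.exp_add]
  have e : (Real.sqrt (2 * π) : ℂ) * Complex.exp (-((π : ℂ) * Complex.I / 4)) *
      (1 / 2 - (starRingEnd ℂ) (κ + RSaux.ep * t)) * (w : ℂ) =
      RSaux.xw w * (1 / 2 - (starRingEnd ℂ) (κ + RSaux.ep * t)) := by
    rw [RSaux.xw, RSaux.ep]; ring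
  rw [e]
  linear_combination (-((w : ℂ) ^ (-s) * Complex.exp (-((w : ℂ) ^ 2 / 2)))) * hk
end
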